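/- (Theorem 11) Let 0 < θ₀ < θ₁ < 1, 0 < q₀, r₀, r₁, r ≤ ∞, a, a₀, b₀, b₁ ∈ SV, and ‖s^{-1/r₀} b₀(s)/a₀(s)‖_{r₀,(1,∞)} < ∞. Put c₀(t) = a₀(t) ‖s^{-1/r₀} b₀(s)/a₀(s)‖_{r₀,(t,∞)} and ρ(t) = t^{θ₁-θ₀} c₀(t)/b₁(t). (i) If 0 < θ < 1 then (Ā^𝓛_{θ₀,r₀,b₀,q₀,a₀}, Ā_{θ₁,r₁;b₁})_{θ,r;a} ≅ Ā_{η,r;a^#}, where η = (1-θ)θ₀ + θθ₁ and a^#(t) = c₀(t)^{1-θ} b₁(t)^θ a(ρ(t)). (ii) If additionally ‖s^{-1/r} a(s)‖_{r,(0,1)} < ∞, then (Ā^𝓛_{θ₀,r₀,b₀,q₀,a₀}, Ā_{θ₁,r₁;b₁})_{1,r;a} ≅ Ā^𝓡_{θ₁,r,a^#,r₁,b₁}, where a^#(t) = b₁(t) a(ρ(t)). -/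

import Mathlib

open MeasureTheory Set ENNReal Filter

noncomputable section

/-- The `L_q` quasi-norm (with respect to Lebesgue measure) of an `ℝ≥0∞`-valued
function over a set of reals; for `q = ∞` it is the essential supremum. -/
def LqNorm (q : ℝ≥0∞) (s : Set ℝ) (g : ℝ → ℝ≥0∞) : ℝ≥0∞ :=
  if q = ∞ then essSup g (volume.restrict s)
  else (∫⁻ t in s, g t ^ q.toReal) ^ q⁻¹.toReal

/-- The weight `s ↦ s ^ (-1/r) * b s`, as an `ℝ≥0∞`-valued function
(`1/∞ = 0` by convention). -/
def svWgt (r : ℝ≥0∞) (b : ℝ → ℝ) : ℝ → ℝ≥0∞ :=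
  fun s => ENNReal.ofReal (s ^ (-(r⁻¹.toReal)) * b s)

/-- `f` and `g` are equivalent on `s`: each is bounded by a constant multiple
of the other there. -/
def EquivOn (s : Set ℝ) (f g : ℝ → ℝ) : Prop :=
  ∃ C : ℝ, 0 < C ∧ ∀ t ∈ s, C⁻¹ * g t ≤ f t ∧ f t ≤ C * g t

/-- A positive measurable function `b` on `(0,∞)` is slowly varying if for every
`ε > 0`, `t ^ ε * b t` is equivalent to a non-decreasing function and
`t ^ (-ε) * b t` is equivalent to a non-increasing function. -/
def SlowlyVarying (b : ℝ → ℝ) : Prop :=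
  AEMeasurable b (volume.restrict (Ioi 0)) ∧ (∀ t ∈ Ioi (0:ℝ), 0 < b t) ∧
    ∀ ε : ℝ, 0 < ε →
      (∃ g : ℝ → ℝ, MonotoneOn g (Ioi 0) ∧ EquivOn (Ioi 0) (fun t => t ^ ε * b t) g) ∧
      (∃ g : ℝ → ℝ, AntitoneOn g (Ioi 0) ∧ EquivOn (Ioi 0) (fun t => t ^ (-ε) * b t) g)

/-- A quasi-Banach space continuously embedded into the ambient (Hausdorff) space `E`,
recorded via its extended-real-valued quasi-norm; the space itself is the set of
vectors of finite quasi-norm. -/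
structure QuasiBanach (E : Type*) [AddCommGroup E] [Module ℝ E] where
  N : E → ℝ≥0∞
  zero : N 0 = 0
  definite : ∀ x, N x = 0 → x = 0
  smul : ∀ (c : ℝ) (x : E), N (c • x) = ENNReal.ofReal |c| * N x
  quasi : ∃ C : ℝ≥0∞, 1 ≤ C ∧ C ≠ ∞ ∧ ∀ x y, N (x + y) ≤ C * (N x + N y)
  complete : ∀ f : ℕ → E,
    (∀ ε : ℝ≥0∞, 0 < ε → ∃ M : ℕ, ∀ m ≥ M, ∀ n ≥ M, N (f m - f n) < ε) →
    (∀ n, N (f n) ≠ ∞) →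
    ∃ g : E, N g ≠ ∞ ∧ Tendsto (fun n => N (f n - g)) atTop (nhds 0)

variable {E : Type*} [AddCommGroup E] [Module ℝ E]

/-- The Peetre K-functional of the couple whose quasi-norms are `N₀`, `N₁`. -/
def Kf (N₀ N₁ : E → ℝ≥0∞) (t : ℝ) (f : E) : ℝ≥0∞ :=
  ⨅ g : E, N₀ g + ENNReal.ofReal t * N₁ (f - g)

/-- The quasi-norm of the real interpolation space `Ā_{θ,q;b}`. -/
def normK (N₀ N₁ : E → ℝ≥0∞) (θ : ℝ) (q : ℝ≥0∞) (b : ℝ → ℝ) (f : E) : ℝ≥0∞ :=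
  LqNorm q (Ioi 0) fun u =>
    ENNReal.ofReal (u ^ (-θ - q⁻¹.toReal) * b u) * Kf N₀ N₁ u f

/-- The quasi-norm of the limiting interpolation space `Ā^𝓛_{σ,r,b,q,a}`. -/
def normL (N₀ N₁ : E → ℝ≥0∞) (σ : ℝ) (r q : ℝ≥0∞) (b a : ℝ → ℝ) (f : E) : ℝ≥0∞ :=
  LqNorm r (Ioi 0) fun t =>
    ENNReal.ofReal (t ^ (-(r⁻¹.toReal)) * (b t / a t)) *
      LqNorm q (Ioo 0 t) fun u =>
        ENNReal.ofReal (u ^ (-σ - q⁻¹.toReal) * a u) * Kf N₀ N₁ u f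

/-- The quasi-norm of the limiting interpolation space `Ā^𝓡_{σ,r,b,q,a}`. -/
def normR (N₀ N₁ : E → ℝ≥0∞) (σ : ℝ) (r q : ℝ≥0∞) (b a : ℝ → ℝ) (f : E) : ℝ≥0∞ :=
  LqNorm r (Ioi 0) fun t =>
    ENNReal.ofReal (t ^ (-(r⁻¹.toReal)) * (b t / a t)) *
      LqNorm q (Ioi t) fun u =>
        ENNReal.ofReal (u ^ (-σ - q⁻¹.toReal) * a u) * Kf N₀ N₁ u f

/-- Two (extended-real-valued) quasi-norms define the same space with
equivalent quasi-norms. -/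
def EquivNorms (nX nY : E → ℝ≥0∞) : Prop :=
  ∃ C : ℝ≥0∞, 0 < C ∧ C ≠ ∞ ∧ ∀ f : E, C⁻¹ * nY f ≤ nX f ∧ nX f ≤ C * nY f

/-! ## Powers of two in `ℝ≥0∞` -/

/-- `2 ^ x` in `ℝ≥0∞`. -/
def P2 (x : ℝ) : ℝ≥0∞ := (2 : ℝ≥0∞) ^ x

lemma P2_add (x y : ℝ) : P2 (x + y) = P2 x * P2 y :=
  ENNReal.rpow_add x y (by norm_num) (by norm_num)

lemma P2_zero : P2 0 = 1 := ENNReal.rpow_zero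

lemma P2_mono {x y : ℝ} (h : x ≤ y) : P2 x ≤ P2 y :=
  ENNReal.rpow_le_rpow_of_exponent_le (by norm_num) h

lemma P2_ne_zero (x : ℝ) : P2 x ≠ 0 := by
  unfold P2
  simp [ENNReal.rpow_eq_zero_iff]

lemma P2_ne_top (x : ℝ) : P2 x ≠ ∞ := by
  unfold P2
  simp [ENNReal.rpow_eq_top_iff]

lemma P2_rpow (x p : ℝ) : P2 x ^ p = P2 (x * p) := by
  unfold P2
  rw [← ENNReal.rpow_mul]

lemma P2_neg (x : ℝ) : P2 (-x) = (P2 x)⁻¹ := ENNReal.rpow_neg _ _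

lemma P2_eq (x : ℝ) : P2 x = ENNReal.ofReal ((2 : ℝ) ^ x) := by
  unfold P2
  rw [← ENNReal.ofReal_rpow_of_pos (by norm_num)]
  norm_num

lemma exists_le_P2 {C : ℝ≥0∞} (hC : C ≠ ∞) : ∃ D : ℝ, 0 ≤ D ∧ C ≤ P2 D := by
  obtain ⟨n, hn⟩ := ENNReal.exists_nat_gt hC
  refine ⟨n, by positivity, hn.le.trans ?_⟩
  unfold P2
  rw [ENNReal.rpow_natCast]
  exact_mod_cast (Nat.lt_two_pow_self (n := n)).le

lemma one_le_P2 {x : ℝ} (h : 0 ≤ x) : 1 ≤ P2 x := by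
  rw [← P2_zero]; exact P2_mono h

lemma le_P2_mul {x : ℝ} (h : 0 ≤ x) (a : ℝ≥0∞) : a ≤ P2 x * a := by
  calc a = 1 * a := (one_mul a).symm
    _ ≤ P2 x * a := by gcongr; exact one_le_P2 h

/-! ## Domination -/

/-- `X` is bounded by a finite constant times `Y`. -/
def LeC {ι : Type*} (X Y : ι → ℝ≥0∞) : Prop := ∃ C : ℝ≥0∞, C ≠ ∞ ∧ ∀ i, X i ≤ C * Y i

lemma LeC.of_le {ι : Type*} {X Y : ι → ℝ≥0∞} (h : ∀ i, X i ≤ Y i) : LeC X Y :=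
  ⟨1, by norm_num, fun i => by simpa using h i⟩

lemma LeC.refl {ι : Type*} (X : ι → ℝ≥0∞) : LeC X X := LeC.of_le fun _ => le_rfl

lemma LeC.trans {ι : Type*} {X Y Z : ι → ℝ≥0∞} (h : LeC X Y) (h' : LeC Y Z) : LeC X Z := by
  obtain ⟨C, hC, h⟩ := h
  obtain ⟨D, hD, h'⟩ := h'
  refine ⟨C * D, ENNReal.mul_ne_top hC hD, fun i => ?_⟩
  calc X i ≤ C * Y i := h i
    _ ≤ C * (D * Z i) := by gcongr; exact h' i
    _ = _ := by ring

lemma LeC.mul {ι : Type*} {X Y Z W : ι → ℝ≥0∞} (h : LeC X Y) (h' : LeC Z W) :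
    LeC (fun i => X i * Z i) (fun i => Y i * W i) := by
  obtain ⟨C, hC, h⟩ := h
  obtain ⟨D, hD, h'⟩ := h'
  refine ⟨C * D, ENNReal.mul_ne_top hC hD, fun i => ?_⟩
  calc X i * Z i ≤ (C * Y i) * (D * W i) := by gcongr; exacts [h i, h' i]
    _ = _ := by ring

lemma LeC.add {ι : Type*} {X Y Z : ι → ℝ≥0∞} (h : LeC X Z) (h' : LeC Y Z) :
    LeC (fun i => X i + Y i) Z := by
  obtain ⟨C, hC, h⟩ := h
  obtain ⟨D, hD, h'⟩ := h'
  refine ⟨C + D, ENNReal.add_ne_top.2 ⟨hC, hD⟩, fun i => ?_⟩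
  calc X i + Y i ≤ (C * Z i) + (D * Z i) := by gcongr; exacts [h i, h' i]
    _ = _ := by ring

lemma EquivNorms.of_LeC {E : Type*} {X Y : E → ℝ≥0∞} (h : LeC X Y) (h' : LeC Y X) :
    EquivNorms X Y := by
  obtain ⟨C, hC, h⟩ := h
  obtain ⟨D, hD, h'⟩ := h'
  have hne : C + D + 1 ≠ ∞ := by simp [hC, hD]
  have h0 : C + D + 1 ≠ 0 := by simp
  refine ⟨C + D + 1, by positivity, hne, fun f => ⟨?_, ?_⟩⟩
  · rw [ENNReal.inv_mul_le_iff h0 hne]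
    refine (h' f).trans (mul_le_mul' ?_ le_rfl)
    exact le_add_right le_add_self
  · refine (h f).trans (mul_le_mul' ?_ le_rfl)
    rw [add_assoc]
    exact le_self_add

/-! ## Discrete norms -/

/-- The `ℓ^q` quasi-norm of a two-sided sequence. -/
def dN (q : ℝ≥0∞) (x : ℤ → ℝ≥0∞) : ℝ≥0∞ :=
  if q = ∞ then ⨆ k, x k else (∑' k, x k ^ q.toReal) ^ q⁻¹.toReal

lemma dN_top (x : ℤ → ℝ≥0∞) : dN ∞ x = ⨆ k, x k := by simp [dN]

lemma dN_of_ne_top {q : ℝ≥0∞} (hq : q ≠ ∞) (x : ℤ → ℝ≥0∞) :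
    dN q x = (∑' k, x k ^ q.toReal) ^ (q.toReal)⁻¹ := by
  simp [dN, hq, ENNReal.toReal_inv]

lemma dN_mono {q : ℝ≥0∞} {x y : ℤ → ℝ≥0∞} (h : ∀ k, x k ≤ y k) : dN q x ≤ dN q y := by
  unfold dN
  split_ifs
  · exact iSup_mono h
  · exact ENNReal.rpow_le_rpow
      (ENNReal.tsum_le_tsum fun k => ENNReal.rpow_le_rpow (h k) ENNReal.toReal_nonneg)
      ENNReal.toReal_nonneg

lemma dN_const_mul {q : ℝ≥0∞} (hq : 0 < q) (c : ℝ≥0∞) (x : ℤ → ℝ≥0∞) :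
    dN q (fun k => c * x k) = c * dN q x := by
  by_cases h : q = ∞
  · subst h
    simp only [dN_top, ENNReal.mul_iSup]
  · have hp : 0 < q.toReal := ENNReal.toReal_pos hq.ne' h
    simp only [dN_of_ne_top h]
    simp only [ENNReal.mul_rpow_of_nonneg _ _ hp.le, ENNReal.tsum_mul_left]
    rw [ENNReal.mul_rpow_of_nonneg _ _ (by positivity), ← ENNReal.rpow_mul,
      mul_inv_cancel₀ hp.ne', ENNReal.rpow_one]

lemma le_dN {q : ℝ≥0∞} (hq : 0 < q) (x : ℤ → ℝ≥0∞) (k : ℤ) : x k ≤ dN q x := by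
  by_cases h : q = ∞
  · subst h
    rw [dN_top]
    exact le_iSup x k
  · have hp : 0 < q.toReal := ENNReal.toReal_pos hq.ne' h
    rw [dN_of_ne_top h, ENNReal.le_rpow_inv_iff hp]
    exact ENNReal.le_tsum (f := fun k => x k ^ q.toReal) k

lemma dN_shift (q : ℝ≥0∞) (x : ℤ → ℝ≥0∞) (m : ℤ) : dN q (fun k => x (k + m)) = dN q x := by
  by_cases h : q = ∞
  · subst h
    simp only [dN_top]
    exact (Equiv.addRight m).iSup_comp (g := x)
  · simp only [dN_of_ne_top h]
    congr 1
    exact (Equiv.addRight m).tsum_eq (fun k => x k ^ q.toReal)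

lemma add_rpow_le' (a b : ℝ≥0∞) {p : ℝ} (hp : 0 ≤ p) :
    (a + b) ^ p ≤ P2 p * (a ^ p + b ^ p) := by
  have h : a + b ≤ 2 * max a b := by
    rw [two_mul]; exact add_le_add (le_max_left _ _) (le_max_right _ _)
  calc (a + b) ^ p ≤ (2 * max a b) ^ p := ENNReal.rpow_le_rpow h hp
    _ = P2 p * (max a b) ^ p := by rw [ENNReal.mul_rpow_of_nonneg _ _ hp]; rfl
    _ ≤ P2 p * (a ^ p + b ^ p) := by
      gcongr
      rcases le_total a b with h | h
      · rw [max_eq_right h]; exact le_add_self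
      · rw [max_eq_left h]; exact le_self_add

lemma dN_add {q : ℝ≥0∞} (hq : 0 < q) : ∃ C : ℝ≥0∞, C ≠ ∞ ∧ ∀ x y : ℤ → ℝ≥0∞,
    dN q (fun k => x k + y k) ≤ C * (dN q x + dN q y) := by
  by_cases h : q = ∞
  · subst h
    refine ⟨1, by norm_num, fun x y => ?_⟩
    simp only [dN_top, one_mul]
    exact iSup_le fun k => add_le_add (le_iSup x k) (le_iSup y k)
  · have hp : 0 < q.toReal := ENNReal.toReal_pos hq.ne' h
    set p := q.toReal with hpdef
    refine ⟨P2 1 * P2 p⁻¹, ENNReal.mul_ne_top (P2_ne_top _) (P2_ne_top _), fun x y => ?_⟩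
    simp only [dN_of_ne_top h, ← hpdef]
    calc (∑' k, (x k + y k) ^ p) ^ p⁻¹
        ≤ (∑' k, P2 p * (x k ^ p + y k ^ p)) ^ p⁻¹ := by
          apply ENNReal.rpow_le_rpow _ (by positivity)
          exact ENNReal.tsum_le_tsum fun k => add_rpow_le' _ _ hp.le
      _ = P2 1 * ((∑' k, x k ^ p) + ∑' k, y k ^ p) ^ p⁻¹ := by
          rw [ENNReal.tsum_mul_left, ENNReal.mul_rpow_of_nonneg _ _ (by positivity), P2_rpow,
            mul_inv_cancel₀ hp.ne', ENNReal.tsum_add]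
      _ ≤ P2 1 * (P2 p⁻¹ * ((∑' k, x k ^ p) ^ p⁻¹ + (∑' k, y k ^ p) ^ p⁻¹)) := by
          gcongr
          exact add_rpow_le' _ _ (by positivity)
      _ = _ := by ring

lemma tsum_geo {δ : ℝ} (hδ : 0 < δ) : ∑' k : ℤ, P2 (-δ * |(k : ℝ)|) ≠ ∞ := by
  have key : ∑' n : ℕ, P2 (-δ * (n : ℝ)) ≠ ∞ := by
    have h1 : ∀ n : ℕ, P2 (-δ * (n : ℝ)) = (P2 (-δ)) ^ n := by
      intro n
      rw [← P2_rpow, ENNReal.rpow_natCast]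
    simp only [h1]
    rw [ENNReal.tsum_geometric]
    apply ENNReal.inv_ne_top.2
    have : P2 (-δ) < 1 := by
      unfold P2
      exact ENNReal.rpow_lt_one_of_one_lt_of_neg (by norm_num) (by linarith)
    exact (tsub_pos_of_lt this).ne'
  rw [tsum_of_nat_of_neg_add_one ENNReal.summable ENNReal.summable]
  refine ENNReal.add_ne_top.2 ⟨?_, ?_⟩
  · simpa using key
  · refine ne_top_of_le_ne_top key (ENNReal.tsum_le_tsum fun n => P2_mono ?_)
    push_cast
    rw [abs_neg, abs_of_nonneg (by positivity)]
    nlinarith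

lemma tsum_geo' {δ : ℝ} (n : ℤ) :
    ∑' k : ℤ, P2 (-δ * |(k : ℝ) - n|) = ∑' k : ℤ, P2 (-δ * |(k : ℝ)|) := by
  rw [← (Equiv.addRight n).tsum_eq]
  simp

/-- Schur-type test with geometric kernels. -/
lemma dN_schur {q : ℝ≥0∞} (hq : 0 < q) {ε : ℝ} (hε : 0 < ε) : ∃ C : ℝ≥0∞, C ≠ ∞ ∧
    ∀ (φ : ℤ → ℤ) (x y : ℤ → ℝ≥0∞),
      (∀ k, x k ≤ ⨆ j, P2 (-ε * |(k : ℝ) - φ j|) * y j) → dN q x ≤ C * dN q y := by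
  by_cases h : q = ∞
  · subst h
    refine ⟨1, by norm_num, fun φ x y hxy => ?_⟩
    simp only [dN_top, one_mul]
    refine iSup_le fun k => (hxy k).trans (iSup_mono fun j => ?_)
    calc P2 (-ε * |(k : ℝ) - φ j|) * y j ≤ P2 0 * y j := by
          gcongr
          apply P2_mono
          have := abs_nonneg ((k : ℝ) - φ j)
          nlinarith
      _ = y j := by rw [P2_zero, one_mul]
  · have hp : 0 < q.toReal := ENNReal.toReal_pos hq.ne' h
    set p := q.toReal with hpdef
    set G := ∑' k : ℤ, P2 (-(ε * p) * |(k : ℝ)|) with hG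
    have hGt : G ≠ ∞ := tsum_geo (by positivity)
    refine ⟨G ^ p⁻¹, ENNReal.rpow_ne_top_of_nonneg (by positivity) hGt, fun φ x y hxy => ?_⟩
    simp only [dN_of_ne_top h, ← hpdef]
    rw [← ENNReal.mul_rpow_of_nonneg _ _ (by positivity)]
    apply ENNReal.rpow_le_rpow _ (by positivity)
    have h1 : ∀ k, x k ^ p ≤ ∑' j, P2 (-(ε * p) * |(k : ℝ) - φ j|) * y j ^ p := by
      intro k
      rw [← ENNReal.le_rpow_inv_iff hp]
      refine (hxy k).trans (iSup_le fun j => ?_)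
      rw [ENNReal.le_rpow_inv_iff hp, ENNReal.mul_rpow_of_nonneg _ _ hp.le, P2_rpow]
      have : -ε * |(k : ℝ) - φ j| * p = -(ε * p) * |(k : ℝ) - φ j| := by ring
      rw [this]
      exact ENNReal.le_tsum (f := fun j => P2 (-(ε * p) * |(k : ℝ) - φ j|) * y j ^ p) j
    calc ∑' k, x k ^ p ≤ ∑' k : ℤ, ∑' j, P2 (-(ε * p) * |(k : ℝ) - φ j|) * y j ^ p :=
          ENNReal.tsum_le_tsum h1
      _ = ∑' j, ∑' k : ℤ, P2 (-(ε * p) * |(k : ℝ) - φ j|) * y j ^ p := ENNReal.tsum_comm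
      _ = ∑' j, G * y j ^ p := by
          congr 1
          ext j
          rw [ENNReal.tsum_mul_right, tsum_geo']
      _ = G * ∑' j, y j ^ p := ENNReal.tsum_mul_left

lemma dN_geo {q : ℝ≥0∞} (hq : 0 < q) {δ : ℝ} (hδ : 0 < δ) : ∃ C : ℝ≥0∞, C ≠ ∞ ∧
    ∀ (n : ℤ) (M : ℝ≥0∞) (x : ℤ → ℝ≥0∞),
      (∀ k, x k ≤ M * P2 (-δ * |(k : ℝ) - n|)) → dN q x ≤ C * M := by
  obtain ⟨C, hC, h⟩ := dN_schur hq hδ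
  refine ⟨C, hC, fun n M x hx => ?_⟩
  have h1 := h (fun _ => n) x (fun j => if j = 0 then M else 0) (fun k => ?_)
  · refine h1.trans ?_
    gcongr
    by_cases h : q = ∞
    · subst h
      rw [dN_top]
      refine iSup_le fun k => ?_
      split_ifs <;> simp
    · have hp : 0 < q.toReal := ENNReal.toReal_pos hq.ne' h
      rw [dN_of_ne_top h, tsum_eq_single 0]
      · simp only [if_true]
        rw [← ENNReal.rpow_mul, mul_inv_cancel₀ hp.ne', ENNReal.rpow_one]
      · intro b hb
        simp [hb, hp]
  · refine (hx k).trans ?_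
    refine le_trans ?_ (le_iSup _ (0 : ℤ))
    simp [mul_comm]

/-! ## Regularly varying sequences -/

/-- The sequence `w` behaves like `2 ^ (s k)` up to slowly varying factors. -/
def Idx (w : ℤ → ℝ≥0∞) (s : ℝ) : Prop :=
  ∀ ε : ℝ, 0 < ε → ∃ C : ℝ≥0∞, C ≠ ∞ ∧ ∀ k j : ℤ,
    w k ≤ C * P2 (s * ((k : ℝ) - j) + ε * |(k : ℝ) - j|) * w j

lemma mul_mul_mul_comm3 (a b c d e f : ℝ≥0∞) :
    a * b * c * (d * e * f) = a * d * (b * e) * (c * f) := by ring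

lemma Idx.mul {w v : ℤ → ℝ≥0∞} {s t : ℝ} (h : Idx w s) (h' : Idx v t) :
    Idx (fun k => w k * v k) (s + t) := by
  intro ε hε
  obtain ⟨C, hC, h⟩ := h (ε / 2) (by positivity)
  obtain ⟨D, hD, h'⟩ := h' (ε / 2) (by positivity)
  refine ⟨C * D, ENNReal.mul_ne_top hC hD, fun k j => ?_⟩
  have e : (s + t) * ((k : ℝ) - j) + ε * |(k : ℝ) - j| =
    (s * ((k : ℝ) - j) + ε / 2 * |(k : ℝ) - j|) + (t * ((k : ℝ) - j) + ε / 2 * |(k : ℝ) - j|) := by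
    ring
  calc w k * v k ≤ _ := mul_le_mul' (h k j) (h' k j)
    _ = _ := by
      rw [e, P2_add (s * ((k : ℝ) - j) + ε / 2 * |(k : ℝ) - j|)]
      exact mul_mul_mul_comm3 _ _ _ _ _ _

lemma Idx.inv {w : ℤ → ℝ≥0∞} {s : ℝ} (h : Idx w s) : Idx (fun k => (w k)⁻¹) (-s) := by
  intro ε hε
  obtain ⟨C, hC, h⟩ := h ε hε
  refine ⟨C + 1, by simp [hC], fun k j => ?_⟩
  set F := (C + 1) * P2 (-s * ((k : ℝ) - j) + ε * |(k : ℝ) - j|) with hF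
  have hF0 : F ≠ 0 := mul_ne_zero (by simp) (P2_ne_zero _)
  have hFt : F ≠ ∞ := ENNReal.mul_ne_top (by simp [hC]) (P2_ne_top _)
  have h1 : w j ≤ F * w k := by
    refine (h j k).trans ?_
    have e : s * ((j : ℝ) - k) + ε * |(j : ℝ) - k| = -s * ((k : ℝ) - j) + ε * |(k : ℝ) - j| := by
      rw [abs_sub_comm]; ring
    rw [e, hF]
    gcongr
    exact le_self_add
  have h2 := ENNReal.inv_le_inv.2 h1
  rw [ENNReal.mul_inv (Or.inl hF0) (Or.inl hFt), ENNReal.inv_mul_le_iff hF0 hFt] at h2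
  exact h2

lemma Idx.rpow {w : ℤ → ℝ≥0∞} {s p : ℝ} (hp : 0 ≤ p) (h : Idx w s) :
    Idx (fun k => w k ^ p) (s * p) := by
  intro ε hε
  obtain ⟨C, hC, h⟩ := h (ε / (p + 1)) (by positivity)
  refine ⟨C ^ p, ENNReal.rpow_ne_top_of_nonneg hp hC, fun k j => ?_⟩
  calc w k ^ p ≤ (C * P2 (s * ((k : ℝ) - j) + ε / (p + 1) * |(k : ℝ) - j|) * w j) ^ p :=
        ENNReal.rpow_le_rpow (h k j) hp
    _ = C ^ p * P2 ((s * ((k : ℝ) - j) + ε / (p + 1) * |(k : ℝ) - j|) * p) * w j ^ p := by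
        rw [ENNReal.mul_rpow_of_nonneg _ _ hp, ENNReal.mul_rpow_of_nonneg _ _ hp, P2_rpow]
    _ ≤ _ := by
        gcongr
        apply P2_mono
        have h1 : ε / (p + 1) * p ≤ ε := by
          rw [div_mul_eq_mul_div, div_le_iff₀ (by positivity)]
          nlinarith
        have h2 := mul_le_mul_of_nonneg_right h1 (abs_nonneg ((k : ℝ) - j))
        nlinarith

lemma Idx_P2 (s : ℝ) : Idx (fun k => P2 (s * k)) s := by
  intro ε hε
  refine ⟨1, by norm_num, fun k j => ?_⟩
  rw [one_mul, ← P2_add]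
  apply P2_mono
  have := abs_nonneg ((k : ℝ) - j)
  nlinarith

lemma Idx.congr {w v : ℤ → ℝ≥0∞} {s : ℝ} (h : Idx w s) (h1 : LeC w v) (h2 : LeC v w) :
    Idx v s := by
  intro ε hε
  obtain ⟨C, hC, h⟩ := h ε hε
  obtain ⟨D, hD, h1⟩ := h1
  obtain ⟨D', hD', h2⟩ := h2
  refine ⟨D' * C * D, by finiteness, fun k j => ?_⟩
  calc v k ≤ D' * w k := h2 k
    _ ≤ D' * (C * P2 (s * ((k : ℝ) - j) + ε * |(k : ℝ) - j|) * (D * v j)) := by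
        gcongr
        refine (h k j).trans ?_
        gcongr
        exact h1 j
    _ = _ := by ring

/-- Tails of slowly varying sequences are slowly varying. -/
lemma Idx.tail {w : ℤ → ℝ≥0∞} (h : Idx w 0) {q : ℝ≥0∞} (hq : 0 < q) :
    Idx (fun k => dN q (fun j => if k ≤ j then w j else 0)) 0 := by
  intro ε hε
  obtain ⟨C, hC, h⟩ := h ε hε
  refine ⟨C, hC, fun k j => ?_⟩
  beta_reduce
  rw [← dN_shift q (fun j => if k ≤ j then w j else 0) (k - j), ← dN_const_mul hq]
  apply dN_mono
  intro i
  by_cases hij : j ≤ i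
  · rw [if_pos (by omega), if_pos hij]
    have := h (i + (k - j)) i
    push_cast at this
    have e : (i : ℝ) + (k - j) - i = k - j := by ring
    rwa [e] at this
  · rw [if_neg (by omega)]
    exact zero_le

/-! ## Slowly varying functions -/

lemma SV2 {b : ℝ → ℝ} (hb : SlowlyVarying b) {ε : ℝ} (hε : 0 < ε) :
    ∃ C : ℝ≥0∞, C ≠ ∞ ∧ ∀ s t M : ℝ, 0 < s → 0 < t → 1 ≤ M → s ≤ M * t → t ≤ M * s →
      ENNReal.ofReal (b s) ≤ C * ENNReal.ofReal (M ^ ε) * ENNReal.ofReal (b t) := by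
  obtain ⟨_, hpos, h⟩ := hb
  obtain ⟨⟨g, hg, C, hC, hgC⟩, ⟨g', hg', D, hD, hgD⟩⟩ := h ε hε
  refine ⟨ENNReal.ofReal (C * C + D * D), by simp, fun s t M hs ht hM hst hts => ?_⟩
  have hbt := hpos t ht
  have hbs := hpos s hs
  have hMp : 0 < M ^ ε := Real.rpow_pos_of_pos (by linarith) _
  rw [← ENNReal.ofReal_mul (by positivity), ← ENNReal.ofReal_mul (by positivity)]
  apply ENNReal.ofReal_le_ofReal
  suffices hh : b s ≤ C * C * M ^ ε * b t ∨ b s ≤ D * D * M ^ ε * b t by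
    have : 0 ≤ C * C * M ^ ε * b t := by positivity
    have : 0 ≤ D * D * M ^ ε * b t := by positivity
    rcases hh with hh | hh <;> nlinarith
  have hsp : 0 < s ^ ε := Real.rpow_pos_of_pos hs _
  have htp : 0 < t ^ ε := Real.rpow_pos_of_pos ht _
  rcases le_total s t with hle | hle
  · left
    have h1 := (hgC s hs).2
    have h2 := (hgC t ht).1
    have h3 := hg hs ht hle
    rw [inv_mul_le_iff₀ hC] at h2
    have h4 : s ^ ε * b s ≤ C * (C * (t ^ ε * b t)) := by
      refine h1.trans ?_
      gcongr
      exact h3.trans h2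
    have h5 : t ^ ε ≤ M ^ ε * s ^ ε := by
      rw [← Real.mul_rpow (by linarith) hs.le]
      exact Real.rpow_le_rpow ht.le hts hε.le
    have h6 : s ^ ε * b s ≤ s ^ ε * (C * C * M ^ ε * b t) := by
      refine h4.trans ?_
      calc C * (C * (t ^ ε * b t)) ≤ C * (C * (M ^ ε * s ^ ε * b t)) := by gcongr
        _ = _ := by ring
    exact le_of_mul_le_mul_left h6 hsp
  · right
    have h1 := (hgD s hs).2
    have h2 := (hgD t ht).1
    have h3 := hg' ht hs hle
    rw [inv_mul_le_iff₀ hD] at h2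
    have h4 : s ^ (-ε) * b s ≤ D * (D * (t ^ (-ε) * b t)) := by
      refine h1.trans ?_
      gcongr
      exact h3.trans h2
    have h5 : s ^ ε ≤ M ^ ε * t ^ ε := by
      rw [← Real.mul_rpow (by linarith) ht.le]
      exact Real.rpow_le_rpow hs.le hst hε.le
    rw [Real.rpow_neg hs.le, Real.rpow_neg ht.le, inv_mul_le_iff₀ hsp] at h4
    refine h4.trans ?_
    calc s ^ ε * (D * (D * ((t ^ ε)⁻¹ * b t)))
        ≤ (M ^ ε * t ^ ε) * (D * (D * ((t ^ ε)⁻¹ * b t))) := by gcongr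
      _ = _ := by field_simp

lemma SV_pos {b : ℝ → ℝ} (hb : SlowlyVarying b) {t : ℝ} (ht : 0 < t) : 0 < b t := hb.2.1 t ht

/-- Dyadic points. -/
def dy (k : ℤ) : ℝ := (2 : ℝ) ^ (k : ℝ)

lemma dy_pos (k : ℤ) : 0 < dy k := Real.rpow_pos_of_pos (by norm_num) _

lemma dy_succ (k : ℤ) : dy (k + 1) = 2 * dy k := by
  unfold dy
  push_cast
  rw [Real.rpow_add (by norm_num), Real.rpow_one, mul_comm]

lemma dy_mono {j k : ℤ} (h : j ≤ k) : dy j ≤ dy k :=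
  Real.rpow_le_rpow_of_exponent_le (by norm_num) (by exact_mod_cast h)

lemma dy_lt {j k : ℤ} (h : dy j < dy k) : j < k := by
  by_contra hh
  exact absurd (dy_mono (not_lt.1 hh)) (not_le.2 h)

lemma ofReal_dy (k : ℤ) : ENNReal.ofReal (dy k) = P2 k := (P2_eq _).symm

lemma dy_zero : dy 0 = 1 := by simp [dy]

/-- A slowly varying function composed with a positive sequence of polynomial growth. -/
lemma Idx_comp {b : ℝ → ℝ} (hb : SlowlyVarying b) {ρ : ℤ → ℝ} (hρ : ∀ k, 0 < ρ k) {s : ℝ}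
    (h : Idx (fun k => ENNReal.ofReal (ρ k)) s) :
    Idx (fun k => ENNReal.ofReal (b (ρ k))) 0 := by
  intro ε hε
  obtain ⟨C, hC, h⟩ := h 1 one_pos
  obtain ⟨D, hD, hCD⟩ := exists_le_P2 hC
  set ε' := ε / (|s| + 1) with hε'
  have hs : 0 < |s| + 1 := by positivity
  obtain ⟨G, hG, hSV⟩ := SV2 hb (ε := ε') (by positivity)
  refine ⟨G * P2 (D * ε'), ENNReal.mul_ne_top hG (P2_ne_top _), fun k j => ?_⟩
  have h1 : ∀ k j : ℤ, ρ k ≤ (2 : ℝ) ^ (D + (|s| + 1) * |(k : ℝ) - j|) * ρ j := by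
    intro k j
    have : ENNReal.ofReal (ρ k) ≤
        ENNReal.ofReal ((2 : ℝ) ^ (D + (|s| + 1) * |(k : ℝ) - j|) * ρ j) := by
      rw [ENNReal.ofReal_mul (by positivity), ← P2_eq]
      refine (h k j).trans ?_
      gcongr
      rw [P2_add D]
      refine mul_le_mul' hCD (P2_mono ?_)
      have : s * ((k : ℝ) - j) ≤ |s| * |(k : ℝ) - j| := by
        rw [← abs_mul]; exact le_abs_self _
      linarith
    exact (ENNReal.ofReal_le_ofReal_iff (by have := hρ j; positivity)).1 this
  have h2 := h1 j k
  rw [abs_sub_comm] at h2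
  refine (hSV (ρ k) (ρ j) _ (hρ k) (hρ j) ?_ (h1 k j) h2).trans ?_
  · apply Real.one_le_rpow (by norm_num)
    positivity
  · refine mul_le_mul' ?_ le_rfl
    rw [← Real.rpow_mul (by norm_num), ← P2_eq, mul_assoc, ← P2_add]
    refine mul_le_mul' le_rfl ?_
    apply P2_mono
    have : (|s| + 1) * ε' = ε := by rw [hε']; field_simp
    apply le_of_eq
    rw [← this]
    ring

lemma Idx_dy (s : ℝ) : Idx (fun k => ENNReal.ofReal (dy k ^ s)) s := by
  have : (fun k : ℤ => ENNReal.ofReal (dy k ^ s)) = fun k : ℤ => P2 (s * k) := by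
    ext k
    rw [P2_eq, dy, ← Real.rpow_mul (by norm_num), mul_comm]
  rw [this]
  exact Idx_P2 s

lemma Idx_SV {b : ℝ → ℝ} (hb : SlowlyVarying b) : Idx (fun k => ENNReal.ofReal (b (dy k))) 0 := by
  apply Idx_comp hb dy_pos (s := 1)
  have := Idx_dy 1
  simpa using this

/-! ## Discretization of `LqNorm` -/

lemma LqNorm_mono {q : ℝ≥0∞} {s : Set ℝ} (hs : MeasurableSet s) {g h : ℝ → ℝ≥0∞}
    (hgh : ∀ u ∈ s, g u ≤ h u) : LqNorm q s g ≤ LqNorm q s h := by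
  unfold LqNorm
  split_ifs
  · refine essSup_mono_ae ?_
    exact (ae_restrict_iff' hs).2 (Eventually.of_forall hgh)
  · apply ENNReal.rpow_le_rpow _ ENNReal.toReal_nonneg
    exact setLIntegral_mono' hs fun u hu => ENNReal.rpow_le_rpow (hgh u hu) ENNReal.toReal_nonneg

lemma LqNorm_congr {q : ℝ≥0∞} {s : Set ℝ} (hs : MeasurableSet s) {g h : ℝ → ℝ≥0∞}
    (hgh : ∀ u ∈ s, g u = h u) : LqNorm q s g = LqNorm q s h :=
  le_antisymm (LqNorm_mono hs fun u hu => (hgh u hu).le)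
    (LqNorm_mono hs fun u hu => (hgh u hu).ge)

lemma LqNorm_const_mul {q : ℝ≥0∞} (hq : 0 < q) (s : Set ℝ) {C : ℝ≥0∞} (hC : C ≠ ∞)
    (g : ℝ → ℝ≥0∞) : LqNorm q s (fun u => C * g u) = C * LqNorm q s g := by
  unfold LqNorm
  split_ifs with h
  · exact ENNReal.essSup_const_mul
  · have hp : 0 < q.toReal := ENNReal.toReal_pos hq.ne' h
    simp only [ENNReal.mul_rpow_of_nonneg _ _ hp.le]
    rw [lintegral_const_mul' _ _ (ENNReal.rpow_ne_top_of_nonneg hp.le hC),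
      ENNReal.mul_rpow_of_nonneg _ _ ENNReal.toReal_nonneg, ← ENNReal.rpow_mul,
      ENNReal.toReal_inv, mul_inv_cancel₀ hp.ne', ENNReal.rpow_one]

lemma LqNorm_indicator {q : ℝ≥0∞} (hq : 0 < q) {s t : Set ℝ} (hs : MeasurableSet s)
    (hst : s ⊆ t) (g : ℝ → ℝ≥0∞) : LqNorm q t (s.indicator g) = LqNorm q s g := by
  unfold LqNorm
  split_ifs with h
  · rw [essSup_indicator_eq_essSup_restrict hs, Measure.restrict_restrict hs,
      inter_eq_left.2 hst]
  · have hp : 0 < q.toReal := ENNReal.toReal_pos hq.ne' h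
    have : (fun u => s.indicator g u ^ q.toReal) = s.indicator (fun u => g u ^ q.toReal) := by
      ext u
      by_cases hu : u ∈ s <;> simp [hu, hp]
    rw [this, setLIntegral_indicator hs, inter_eq_left.2 hst]

/-- Dyadic pieces. -/
def pc (k : ℤ) : Set ℝ := Ioc (dy k) (dy (k + 1))

lemma pc_meas (k : ℤ) : MeasurableSet (pc k) := measurableSet_Ioc

lemma pc_pos {k : ℤ} {u : ℝ} (hu : u ∈ pc k) : 0 < u := (dy_pos k).trans hu.1

lemma exists_pc {u : ℝ} (hu : 0 < u) : ∃ k, u ∈ pc k := by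
  obtain ⟨n, hn⟩ := exists_mem_Ioc_zpow hu (by norm_num : (1 : ℝ) < 2)
  refine ⟨n, ?_⟩
  unfold pc dy
  rw [Real.rpow_intCast, Real.rpow_intCast]
  exact hn

lemma Ioi_eq_iUnion : Ioi (0 : ℝ) = ⋃ k, pc k := by
  ext u
  simp only [mem_iUnion]
  exact ⟨fun h => exists_pc h, fun ⟨k, hk⟩ => pc_pos hk⟩

lemma pc_disj : Pairwise (Function.onFun Disjoint pc) := by
  intro i j hij
  rw [Function.onFun, Set.disjoint_left]
  intro u hi hj
  have h1 : i < j + 1 := dy_lt (hi.1.trans_le hj.2)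
  have h2 : j < i + 1 := dy_lt (hj.1.trans_le hi.2)
  omega

lemma volume_pc (k : ℤ) : volume (pc k) = P2 k := by
  unfold pc
  rw [Real.volume_Ioc, dy_succ, ← ofReal_dy]
  congr 1
  ring

lemma wgt_rpow {q : ℝ≥0∞} (hq : 0 < q) (h : q ≠ ∞) {u : ℝ} (hu : 0 < u) :
    ENNReal.ofReal (u ^ (-(q⁻¹.toReal))) ^ q.toReal = ENNReal.ofReal u⁻¹ := by
  have hp : 0 < q.toReal := ENNReal.toReal_pos hq.ne' h
  rw [ENNReal.ofReal_rpow_of_pos (Real.rpow_pos_of_pos hu _), ← Real.rpow_mul hu.le,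
    ENNReal.toReal_inv, neg_mul, inv_mul_cancel₀ hp.ne', Real.rpow_neg_one]

lemma disc_upper {q : ℝ≥0∞} (hq : 0 < q) {g : ℝ → ℝ≥0∞} {x : ℤ → ℝ≥0∞}
    (h : ∀ k, ∀ u ∈ pc k, g u ≤ x k) :
    LqNorm q (Ioi 0) (fun u => ENNReal.ofReal (u ^ (-(q⁻¹.toReal))) * g u) ≤ dN q x := by
  by_cases hq' : q = ∞
  · subst hq'
    simp only [LqNorm, if_true, dN_top]
    refine essSup_le_of_ae_le _ ?_
    refine (ae_restrict_iff' measurableSet_Ioi).2 (Eventually.of_forall fun u hu => ?_)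
    obtain ⟨k, hk⟩ := exists_pc hu
    simpa using (h k u hk).trans (le_iSup x k)
  · have hp : 0 < q.toReal := ENNReal.toReal_pos hq.ne' hq'
    simp only [LqNorm, if_neg hq', dN]
    apply ENNReal.rpow_le_rpow _ ENNReal.toReal_nonneg
    rw [Ioi_eq_iUnion, lintegral_iUnion pc_meas pc_disj]
    refine ENNReal.tsum_le_tsum fun k => ?_
    calc ∫⁻ u in pc k, (ENNReal.ofReal (u ^ (-(q⁻¹.toReal))) * g u) ^ q.toReal
        ≤ ∫⁻ u in pc k, P2 (-k) * x k ^ q.toReal := by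
          refine setLIntegral_mono' (pc_meas k) fun u hu => ?_
          rw [ENNReal.mul_rpow_of_nonneg _ _ hp.le, wgt_rpow hq hq' (pc_pos hu)]
          gcongr
          · rw [P2_eq]
            apply ENNReal.ofReal_le_ofReal
            rw [Real.rpow_neg (by norm_num)]
            exact inv_anti₀ (dy_pos k) hu.1.le
          · exact h k u hu
      _ = x k ^ q.toReal := by
          rw [setLIntegral_const, volume_pc, mul_right_comm, ← P2_add]
          simp [P2_zero]
      _ ≤ _ := le_rfl

lemma disc_lower {q : ℝ≥0∞} (hq : 0 < q) : ∃ C : ℝ≥0∞, C ≠ ∞ ∧ ∀ (g : ℝ → ℝ≥0∞) (x : ℤ → ℝ≥0∞),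
    (∀ k, ∀ u ∈ pc k, x k ≤ g u) → dN q x ≤
      C * LqNorm q (Ioi 0) (fun u => ENNReal.ofReal (u ^ (-(q⁻¹.toReal))) * g u) := by
  by_cases hq' : q = ∞
  · subst hq'
    refine ⟨1, by norm_num, fun g x h => ?_⟩
    simp only [LqNorm, if_true, dN_top, one_mul]
    refine iSup_le fun k => ?_
    by_contra hlt
    push Not at hlt
    have h1 : ∀ᵐ u ∂(volume.restrict (Ioi (0 : ℝ))),
        ENNReal.ofReal (u ^ (-((∞ : ℝ≥0∞)⁻¹.toReal))) * g u ≤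
        essSup (fun u => ENNReal.ofReal (u ^ (-((∞ : ℝ≥0∞)⁻¹.toReal))) * g u)
          (volume.restrict (Ioi (0 : ℝ))) := ENNReal.ae_le_essSup _
    rw [ae_restrict_iff' measurableSet_Ioi] at h1
    have h2 : volume (pc k) = 0 := by
      refine measure_mono_null ?_ (mem_ae_iff.1 h1)
      intro u hu
      simp only [mem_compl_iff, mem_ofPred_eq, not_forall, not_le]
      refine ⟨pc_pos hu, lt_of_lt_of_le hlt ?_⟩
      simpa using h k u hu
    rw [volume_pc] at h2
    exact P2_ne_zero _ h2
  · have hp : 0 < q.toReal := ENNReal.toReal_pos hq.ne' hq'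
    refine ⟨P2 1 ^ q⁻¹.toReal, ENNReal.rpow_ne_top_of_nonneg ENNReal.toReal_nonneg (P2_ne_top _),
      fun g x h => ?_⟩
    simp only [LqNorm, if_neg hq', dN]
    rw [← ENNReal.mul_rpow_of_nonneg _ _ ENNReal.toReal_nonneg]
    apply ENNReal.rpow_le_rpow _ ENNReal.toReal_nonneg
    rw [Ioi_eq_iUnion, lintegral_iUnion pc_meas pc_disj, ← ENNReal.tsum_mul_left]
    refine ENNReal.tsum_le_tsum fun k => ?_
    calc x k ^ q.toReal = P2 1 * ∫⁻ u in pc k, P2 (-(k + 1)) * x k ^ q.toReal := by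
          rw [setLIntegral_const, volume_pc, mul_right_comm, ← P2_add, ← mul_assoc, ← P2_add]
          simp [P2_zero]
      _ ≤ P2 1 * ∫⁻ u in pc k, (ENNReal.ofReal (u ^ (-(q⁻¹.toReal))) * g u) ^ q.toReal := by
          refine mul_le_mul' le_rfl ?_
          refine setLIntegral_mono' (pc_meas k) fun u hu => ?_
          rw [ENNReal.mul_rpow_of_nonneg _ _ hp.le, wgt_rpow hq hq' (pc_pos hu)]
          gcongr
          · rw [P2_eq]
            apply ENNReal.ofReal_le_ofReal
            rw [Real.rpow_neg (by norm_num)]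
            apply inv_anti₀ (pc_pos hu)
            have := hu.2
            unfold dy at this
            push_cast at this
            exact this
          · exact h k u hu

/-- A family of functions which is essentially constant on dyadic pieces. -/
def RegF {ι : Type*} (g : ι → ℝ → ℝ≥0∞) : Prop :=
  ∃ C : ℝ≥0∞, C ≠ ∞ ∧ ∀ i k, ∀ u ∈ pc k, g i u ≤ C * g i (dy k) ∧ g i (dy k) ≤ C * g i u

lemma RegF.mul {ι : Type*} {g h : ι → ℝ → ℝ≥0∞} (hg : RegF g) (hh : RegF h) :
    RegF (fun i u => g i u * h i u) := by
  obtain ⟨C, hC, hg⟩ := hg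
  obtain ⟨D, hD, hh⟩ := hh
  refine ⟨C * D, ENNReal.mul_ne_top hC hD, fun i k u hu => ⟨?_, ?_⟩⟩
  · calc g i u * h i u ≤ (C * g i (dy k)) * (D * h i (dy k)) :=
          mul_le_mul' (hg i k u hu).1 (hh i k u hu).1
      _ = _ := by ring
  · calc g i (dy k) * h i (dy k) ≤ (C * g i u) * (D * h i u) :=
          mul_le_mul' (hg i k u hu).2 (hh i k u hu).2
      _ = _ := by ring

lemma RegF.const {ι : Type*} {g : ℝ → ℝ≥0∞} (h : RegF (fun _ : Unit => g)) :
    RegF (fun _ : ι => g) := by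
  obtain ⟨C, hC, h⟩ := h
  exact ⟨C, hC, fun _ k u hu => h () k u hu⟩

/-- Weighted norm over a set. -/
def WN (q : ℝ≥0∞) (s : Set ℝ) (g : ℝ → ℝ≥0∞) : ℝ≥0∞ :=
  LqNorm q s (fun u => ENNReal.ofReal (u ^ (-(q⁻¹.toReal))) * g u)

lemma WN_le {q : ℝ≥0∞} (hq : 0 < q) {s : Set ℝ} (hs : MeasurableSet s) (hs0 : s ⊆ Ioi 0)
    {g : ℝ → ℝ≥0∞} {x : ℤ → ℝ≥0∞}
    (h : ∀ k, ∀ u ∈ pc k, u ∈ s → g u ≤ x k) : WN q s g ≤ dN q x := by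
  unfold WN
  rw [← LqNorm_indicator hq hs hs0]
  have : (s.indicator fun u => ENNReal.ofReal (u ^ (-(q⁻¹.toReal))) * g u) =
      fun u => ENNReal.ofReal (u ^ (-(q⁻¹.toReal))) * s.indicator g u := by
    ext u
    by_cases hu : u ∈ s <;> simp [hu]
  rw [this]
  apply disc_upper hq
  intro k u hu
  by_cases hus : u ∈ s
  · simpa [hus] using h k u hu hus
  · simp [hus]

lemma le_WN {q : ℝ≥0∞} (hq : 0 < q) : ∃ C : ℝ≥0∞, C ≠ ∞ ∧ ∀ (s : Set ℝ), MeasurableSet s →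
    s ⊆ Ioi 0 → ∀ (g : ℝ → ℝ≥0∞) (x : ℤ → ℝ≥0∞),
    (∀ k, ∀ u ∈ pc k, u ∈ s → x k ≤ g u) → (∀ k, ∀ u ∈ pc k, u ∉ s → x k = 0) →
    dN q x ≤ C * WN q s g := by
  obtain ⟨C, hC, h⟩ := disc_lower hq
  refine ⟨C, hC, fun s hs hs0 g x h1 h2 => ?_⟩
  unfold WN
  rw [← LqNorm_indicator hq hs hs0]
  have : (s.indicator fun u => ENNReal.ofReal (u ^ (-(q⁻¹.toReal))) * g u) =
      fun u => ENNReal.ofReal (u ^ (-(q⁻¹.toReal))) * s.indicator g u := by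
    ext u
    by_cases hu : u ∈ s <;> simp [hu]
  rw [this]
  apply h
  intro k u hu
  by_cases hus : u ∈ s
  · simpa [hus] using h1 k u hu hus
  · simp [hus, h2 k u hu hus]

lemma WN_const_mul {q : ℝ≥0∞} (hq : 0 < q) (s : Set ℝ) {C : ℝ≥0∞} (hC : C ≠ ∞)
    (g : ℝ → ℝ≥0∞) : WN q s (fun u => C * g u) = C * WN q s g := by
  unfold WN
  rw [← LqNorm_const_mul hq s hC]
  congr 1
  ext u
  ring

section
variable {ι : Type*} {g : ι → ℝ → ℝ≥0∞}

lemma RegF.disc (hg : RegF g) {q : ℝ≥0∞} (hq : 0 < q) :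
    LeC (fun i => WN q (Ioi 0) (g i)) (fun i => dN q (fun k => g i (dy k))) ∧
    LeC (fun i => dN q (fun k => g i (dy k))) (fun i => WN q (Ioi 0) (g i)) := by
  obtain ⟨C, hC, hg⟩ := hg
  obtain ⟨D, hD, hl⟩ := le_WN hq
  constructor
  · refine ⟨C, hC, fun i => ?_⟩
    rw [← dN_const_mul hq]
    exact WN_le hq measurableSet_Ioi le_rfl fun k u hu _ => (hg i k u hu).1
  · refine ⟨D * C, ENNReal.mul_ne_top hD hC, fun i => ?_⟩
    rw [mul_assoc, ← WN_const_mul hq _ hC]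
    exact hl _ measurableSet_Ioi le_rfl _ _ (fun k u hu _ => (hg i k u hu).2)
      (fun k u hu h => absurd (pc_pos hu) h)

lemma dy_mem_pc (k : ℤ) : dy (k + 1) ∈ pc k := by
  refine ⟨?_, le_rfl⟩
  rw [dy_succ]
  linarith [dy_pos k]

lemma RegF.tail (hg : RegF g) {q : ℝ≥0∞} (hq : 0 < q) :
    ∃ C : ℝ≥0∞, C ≠ ∞ ∧ ∀ i k, ∀ t ∈ Icc (dy k) (dy (k + 1)),
      WN q (Ioi t) (g i) ≤ C * dN q (fun j => if k ≤ j then g i (dy j) else 0) ∧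
      dN q (fun j => if k ≤ j then g i (dy j) else 0) ≤ C * WN q (Ioi t) (g i) := by
  obtain ⟨C, hC, hg⟩ := hg
  obtain ⟨D, hD, hl⟩ := le_WN hq
  refine ⟨C + C * (D * C), by finiteness, fun i k t ht => ⟨?_, ?_⟩⟩
  · refine le_trans ?_ (mul_le_mul' le_self_add le_rfl)
    rw [← dN_const_mul hq]
    have ht0 : 0 < t := (dy_pos k).trans_le ht.1
    refine WN_le hq measurableSet_Ioi (Ioi_subset_Ioi ht0.le) fun j u hu hut => ?_
    have : k < j + 1 := dy_lt (ht.1.trans_lt (hut.trans_le hu.2))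
    rw [if_pos (by omega)]
    exact (hg i j u hu).1
  · refine le_trans ?_ (mul_le_mul' le_add_self le_rfl)
    have ht0 : 0 < t := (dy_pos k).trans_le ht.1
    have h1 : dN q (fun j => if k ≤ j then g i (dy j) else 0) ≤
        C * dN q (fun j => if k + 1 ≤ j then g i (dy j) else 0) := by
      rw [← dN_shift q _ (-1), ← dN_const_mul hq]
      refine dN_mono fun j => ?_
      by_cases hj : k + 1 ≤ j
      · rw [if_pos (by omega), if_pos hj]
        have := (hg i (j + -1) (dy j) ?_).2
        · exact this
        · have := dy_mem_pc (j + -1)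
          simpa using this
      · rw [if_neg (by omega)]
        exact zero_le
    refine h1.trans ?_
    rw [mul_assoc]
    gcongr
    rw [mul_assoc, ← WN_const_mul hq _ hC]
    refine hl _ measurableSet_Ioi (Ioi_subset_Ioi ht0.le) _ _ (fun j u hu hut => ?_)
      (fun j u hu hut => ?_)
    · split_ifs
      · exact (hg i j u hu).2
      · exact zero_le
    · rw [if_neg]
      intro hj
      exact hut (ht.2.trans_lt ((dy_mono hj).trans_lt hu.1))

lemma RegF.head (hg : RegF g) {q : ℝ≥0∞} (hq : 0 < q) :
    ∃ C : ℝ≥0∞, C ≠ ∞ ∧ ∀ i k, ∀ t ∈ Icc (dy k) (dy (k + 1)),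
      WN q (Ioo 0 t) (g i) ≤ C * dN q (fun j => if j ≤ k then g i (dy j) else 0) ∧
      dN q (fun j => if j ≤ k then g i (dy j) else 0) ≤ C * WN q (Ioo 0 t) (g i) := by
  obtain ⟨C, hC, hg⟩ := hg
  obtain ⟨D, hD, hl⟩ := le_WN hq
  refine ⟨C + (C * C) * (D * C), by finiteness, fun i k t ht => ⟨?_, ?_⟩⟩
  · refine le_trans ?_ (mul_le_mul' le_self_add le_rfl)
    rw [← dN_const_mul hq]
    refine WN_le hq measurableSet_Ioo (fun u hu => hu.1) fun j u hu hut => ?_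
    have : j < k + 1 := dy_lt (hu.1.trans (hut.2.trans_le ht.2))
    rw [if_pos (by omega)]
    exact (hg i j u hu).1
  · refine le_trans ?_ (mul_le_mul' le_add_self le_rfl)
    have h1 : dN q (fun j => if j ≤ k then g i (dy j) else 0) ≤
        (C * C) * dN q (fun j => if j + 2 ≤ k then g i (dy j) else 0) := by
      rw [← dN_shift q _ 2, ← dN_const_mul hq]
      refine dN_mono fun j => ?_
      by_cases hj : j + 2 ≤ k
      · rw [if_pos (by omega), if_pos hj]
        have h2 := (hg i j _ (dy_mem_pc j)).1
        have h3 := (hg i (j + 1) _ (dy_mem_pc (j + 1))).1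
        have e : j + 2 = j + 1 + 1 := by ring
        rw [e, mul_assoc]
        refine h3.trans ?_
        gcongr
      · rw [if_neg (by omega)]
        exact zero_le
    refine h1.trans ?_
    rw [mul_assoc (C * C)]
    refine mul_le_mul' le_rfl ?_
    rw [mul_assoc, ← WN_const_mul hq _ hC]
    refine hl _ measurableSet_Ioo (fun u hu => hu.1) _ _ (fun j u hu hut => ?_)
      (fun j u hu hut => ?_)
    · split_ifs
      · exact (hg i j u hu).2
      · exact zero_le
    · rw [if_neg]
      intro hj
      refine hut ⟨pc_pos hu, ?_⟩
      refine hu.2.trans_lt (lt_of_lt_of_le ?_ ht.1)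
      calc dy (j + 1) < dy (j + 1 + 1) := (dy_mem_pc (j + 1)).1
        _ ≤ dy k := dy_mono (by omega)

lemma dy_mem_Icc (k : ℤ) : dy k ∈ Icc (dy k) (dy (k + 1)) := ⟨le_rfl, dy_mono (by omega)⟩

lemma RegF.of_Icc {G : ι → ℝ → ℝ≥0∞} {x : ι → ℤ → ℝ≥0∞}
    (h : ∃ C : ℝ≥0∞, C ≠ ∞ ∧ ∀ i k, ∀ t ∈ Icc (dy k) (dy (k + 1)),
      G i t ≤ C * x i k ∧ x i k ≤ C * G i t) : RegF G := by
  obtain ⟨C, hC, h⟩ := h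
  refine ⟨C * C, ENNReal.mul_ne_top hC hC, fun i k u hu => ⟨?_, ?_⟩⟩
  · rw [mul_assoc]
    refine (h i k u (Ioc_subset_Icc_self hu)).1.trans ?_
    gcongr
    exact (h i k _ (dy_mem_Icc k)).2
  · rw [mul_assoc]
    refine (h i k _ (dy_mem_Icc k)).1.trans ?_
    gcongr
    exact (h i k u (Ioc_subset_Icc_self hu)).2

end

/-! ## The K-functional -/

lemma Kf_mono_t {N₀ N₁ : E → ℝ≥0∞} {s t : ℝ} (h : s ≤ t) (f : E) :
    Kf N₀ N₁ s f ≤ Kf N₀ N₁ t f := by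
  unfold Kf
  exact iInf_mono fun g => by gcongr

lemma Kf_le_mul {N₀ N₁ : E → ℝ≥0∞} {s t M : ℝ} (hM : 1 ≤ M) (h : t ≤ M * s) (f : E) :
    Kf N₀ N₁ t f ≤ ENNReal.ofReal M * Kf N₀ N₁ s f := by
  unfold Kf
  have hM0 : ENNReal.ofReal M ≠ 0 := by
    simp only [ne_eq, ENNReal.ofReal_eq_zero, not_le]; linarith
  rw [ENNReal.mul_iInf_of_ne hM0 ENNReal.ofReal_ne_top]
  refine iInf_mono fun g => ?_
  rw [mul_add, ← mul_assoc, ← ENNReal.ofReal_mul (by linarith)]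
  gcongr
  calc N₀ g = 1 * N₀ g := (one_mul _).symm
    _ ≤ ENNReal.ofReal M * N₀ g := by
      gcongr
      simpa using hM

lemma Kf_LeC {N₀ N₁ N₀' N₁' : E → ℝ≥0∞} (h0 : LeC N₀ N₀') (h1 : LeC N₁ N₁') :
    ∃ C : ℝ≥0∞, C ≠ ∞ ∧ ∀ t f, Kf N₀ N₁ t f ≤ C * Kf N₀' N₁' t f := by
  obtain ⟨C, hC, h0⟩ := h0
  obtain ⟨D, hD, h1⟩ := h1
  refine ⟨C + D + 1, by finiteness, fun t f => ?_⟩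
  unfold Kf
  rw [ENNReal.mul_iInf_of_ne (by simp) (by finiteness)]
  refine iInf_mono fun g => ?_
  calc N₀ g + ENNReal.ofReal t * N₁ (f - g)
      ≤ C * N₀' g + ENNReal.ofReal t * (D * N₁' (f - g)) := by gcongr; exacts [h0 _, h1 _]
    _ ≤ (C + D + 1) * N₀' g + ENNReal.ofReal t * ((C + D + 1) * N₁' (f - g)) := by
        refine add_le_add (mul_le_mul' ?_ le_rfl) (mul_le_mul' le_rfl (mul_le_mul' ?_ le_rfl))
        · rw [add_assoc]; exact le_self_add
        · exact le_add_right le_add_self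
    _ = _ := by ring

lemma Kf_add (A₀ A₁ : QuasiBanach E) : ∃ C : ℝ≥0∞, C ≠ ∞ ∧ ∀ t (x y : E),
    Kf A₀.N A₁.N t (x + y) ≤ C * (Kf A₀.N A₁.N t x + Kf A₀.N A₁.N t y) := by
  obtain ⟨C, hC1, hC, h0⟩ := A₀.quasi
  obtain ⟨D, hD1, hD, h1⟩ := A₁.quasi
  have hne : C + D ≠ ∞ := by finiteness
  have hn0 : C + D ≠ 0 := by
    have : C ≠ 0 := (lt_of_lt_of_le one_pos hC1).ne'
    simp [this]
  refine ⟨C + D, hne, fun t x y => ?_⟩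
  have key : ∀ g g' : E, Kf A₀.N A₁.N t (x + y) ≤ (C + D) *
      ((A₀.N g + ENNReal.ofReal t * A₁.N (x - g)) +
        (A₀.N g' + ENNReal.ofReal t * A₁.N (y - g'))) := by
    intro g g'
    calc Kf A₀.N A₁.N t (x + y) ≤ A₀.N (g + g') + ENNReal.ofReal t * A₁.N (x + y - (g + g')) :=
          iInf_le _ (g + g')
      _ = A₀.N (g + g') + ENNReal.ofReal t * A₁.N ((x - g) + (y - g')) := by
          congr 3; abel
      _ ≤ (C + D) * (A₀.N g + A₀.N g') +
          ENNReal.ofReal t * ((C + D) * (A₁.N (x - g) + A₁.N (y - g'))) := by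
          refine add_le_add ((h0 _ _).trans (mul_le_mul' le_self_add le_rfl))
            (mul_le_mul' le_rfl ((h1 _ _).trans (mul_le_mul' le_add_self le_rfl)))
      _ = _ := by ring
  rw [← ENNReal.inv_mul_le_iff hn0 hne]
  conv_rhs => unfold Kf
  rw [ENNReal.iInf_add]
  refine le_iInf fun g => ?_
  rw [ENNReal.add_iInf]
  refine le_iInf fun g' => ?_
  rw [ENNReal.inv_mul_le_iff hn0 hne]
  exact key g g'

lemma Kf_le_left (A₀ A₁ : QuasiBanach E) (t : ℝ) (f : E) : Kf A₀.N A₁.N t f ≤ A₀.N f := by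
  refine (iInf_le _ f).trans ?_
  simp [A₁.zero]

lemma Kf_le_right (A₀ A₁ : QuasiBanach E) (t : ℝ) (f : E) :
    Kf A₀.N A₁.N t f ≤ ENNReal.ofReal t * A₁.N f := by
  refine (iInf_le _ 0).trans ?_
  simp [A₀.zero]

/-! ## Regular functions -/

/-- A family of functions that is essentially constant on multiplicatively bounded ranges. -/
def MReg {ι : Type*} (g : ι → ℝ → ℝ≥0∞) : Prop :=
  ∀ M : ℝ, 1 ≤ M → ∃ C : ℝ≥0∞, C ≠ ∞ ∧ ∀ i s t, 0 < s → 0 < t → s ≤ M * t → t ≤ M * s →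
    g i s ≤ C * g i t

section
variable {ι : Type*}

lemma MReg.regF {g : ι → ℝ → ℝ≥0∞} (h : MReg g) : RegF g := by
  obtain ⟨C, hC, h⟩ := h 2 (by norm_num)
  refine ⟨C, hC, fun i k u hu => ?_⟩
  have h1 : dy k ≤ 2 * u := by linarith [hu.1, pc_pos hu]
  have h2 : u ≤ 2 * dy k := by rw [← dy_succ]; exact hu.2
  exact ⟨h i _ _ (pc_pos hu) (dy_pos k) h2 h1, h i _ _ (dy_pos k) (pc_pos hu) h1 h2⟩

lemma MReg.mul {g h : ι → ℝ → ℝ≥0∞} (hg : MReg g) (hh : MReg h) :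
    MReg (fun i u => g i u * h i u) := by
  intro M hM
  obtain ⟨C, hC, hg⟩ := hg M hM
  obtain ⟨D, hD, hh⟩ := hh M hM
  refine ⟨C * D, ENNReal.mul_ne_top hC hD, fun i s t hs ht h1 h2 => ?_⟩
  calc g i s * h i s ≤ (C * g i t) * (D * h i t) :=
        mul_le_mul' (hg i s t hs ht h1 h2) (hh i s t hs ht h1 h2)
    _ = _ := by ring

lemma MReg_pow (p : ℝ) : MReg (fun (_ : ι) u => ENNReal.ofReal (u ^ p)) := by
  intro M hM
  refine ⟨ENNReal.ofReal (M ^ |p|), ENNReal.ofReal_ne_top, fun i s t hs ht h1 h2 => ?_⟩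
  have hM0 : 0 < M := by linarith
  rw [← ENNReal.ofReal_mul (by positivity)]
  apply ENNReal.ofReal_le_ofReal
  rcases le_total 0 p with hp | hp
  · rw [abs_of_nonneg hp, ← Real.mul_rpow hM0.le ht.le]
    exact Real.rpow_le_rpow hs.le h1 hp
  · rw [abs_of_nonpos hp]
    have := Real.rpow_le_rpow_of_nonpos ht h2 hp
    rw [Real.mul_rpow hM0.le hs.le] at this
    rw [Real.rpow_neg hM0.le, le_inv_mul_iff₀ (by positivity)]
    exact this

lemma MReg_SV {b : ℝ → ℝ} (hb : SlowlyVarying b) :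
    MReg (fun (_ : ι) u => ENNReal.ofReal (b u)) := by
  intro M hM
  obtain ⟨C, hC, h⟩ := SV2 hb one_pos
  exact ⟨C * ENNReal.ofReal (M ^ (1 : ℝ)), by finiteness,
    fun i s t hs ht h1 h2 => h s t M hs ht hM h1 h2⟩

lemma MReg_Kf (N₀ N₁ : E → ℝ≥0∞) : MReg (fun f u => Kf N₀ N₁ u f) := by
  intro M hM
  exact ⟨ENNReal.ofReal M, ENNReal.ofReal_ne_top, fun f s t _ _ h1 _ => Kf_le_mul hM h1 f⟩

lemma RegF.congr {g h : ι → ℝ → ℝ≥0∞} (hg : RegF g) (e : ∀ i u, 0 < u → g i u = h i u) :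
    RegF h := by
  obtain ⟨C, hC, hg⟩ := hg
  refine ⟨C, hC, fun i k u hu => ?_⟩
  rw [← e i u (pc_pos hu), ← e i _ (dy_pos k)]
  exact hg i k u hu

lemma MReg.congr {g h : ι → ℝ → ℝ≥0∞} (hg : MReg g) (e : ∀ i u, 0 < u → g i u = h i u) :
    MReg h := by
  intro M hM
  obtain ⟨C, hC, hg⟩ := hg M hM
  refine ⟨C, hC, fun i s t hs ht h1 h2 => ?_⟩
  rw [← e i s hs, ← e i t ht]
  exact hg i s t hs ht h1 h2

lemma RegF.rpow {g : ι → ℝ → ℝ≥0∞} (hg : RegF g) {p : ℝ} (hp : 0 ≤ p) :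
    RegF (fun i u => g i u ^ p) := by
  obtain ⟨C, hC, hg⟩ := hg
  refine ⟨C ^ p, ENNReal.rpow_ne_top_of_nonneg hp hC, fun i k u hu => ?_⟩
  rw [← ENNReal.mul_rpow_of_nonneg _ _ hp, ← ENNReal.mul_rpow_of_nonneg _ _ hp]
  exact ⟨ENNReal.rpow_le_rpow (hg i k u hu).1 hp, ENNReal.rpow_le_rpow (hg i k u hu).2 hp⟩

lemma RegF.inv {g : ι → ℝ → ℝ≥0∞} (hg : RegF g) : RegF (fun i u => (g i u)⁻¹) := by
  obtain ⟨C, hC, hg⟩ := hg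
  have h0 : C + 1 ≠ 0 := by simp
  have ht : C + 1 ≠ ∞ := by finiteness
  have key : ∀ a b : ℝ≥0∞, a ≤ C * b → b⁻¹ ≤ (C + 1) * a⁻¹ := by
    intro a b hab
    have h1 : a ≤ (C + 1) * b := hab.trans (mul_le_mul' le_self_add le_rfl)
    have h2 := ENNReal.inv_le_inv.2 h1
    rwa [ENNReal.mul_inv (Or.inl h0) (Or.inl ht), ENNReal.inv_mul_le_iff h0 ht] at h2
  exact ⟨C + 1, ht, fun i k u hu => ⟨key _ _ (hg i k u hu).2, key _ _ (hg i k u hu).1⟩⟩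

/-- Composition of a slowly varying function with a regular positive function. -/
lemma RegF_comp {b : ℝ → ℝ} (hb : SlowlyVarying b) {ρ : ℝ → ℝ} (hρ : ∀ u, 0 < u → 0 < ρ u)
    (h : RegF (fun (_ : Unit) u => ENNReal.ofReal (ρ u))) :
    RegF (fun (_ : ι) u => ENNReal.ofReal (b (ρ u))) := by
  obtain ⟨C, hC, h⟩ := h
  have hM : (1 : ℝ) ≤ C.toReal + 1 := by linarith [ENNReal.toReal_nonneg (a := C)]
  obtain ⟨D, hD, hb⟩ := MReg_SV (ι := ι) hb (C.toReal + 1) hM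
  have key : ∀ x y : ℝ, 0 < y → ENNReal.ofReal x ≤ C * ENNReal.ofReal y →
      x ≤ (C.toReal + 1) * y := by
    intro x y hy hxy
    rw [← ENNReal.ofReal_toReal hC, ← ENNReal.ofReal_mul ENNReal.toReal_nonneg,
      ENNReal.ofReal_le_ofReal_iff (by positivity)] at hxy
    linarith
  refine ⟨D, hD, fun i k u hu => ?_⟩
  have p1 := hρ u (pc_pos hu)
  have p2 := hρ _ (dy_pos k)
  have h1 := key _ _ p2 (h () k u hu).1
  have h2 := key _ _ p1 (h () k u hu).2
  exact ⟨hb i _ _ p1 p2 h1 h2, hb i _ _ p2 p1 h2 h1⟩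

lemma normK_eq (N₀ N₁ : E → ℝ≥0∞) (θ : ℝ) (q : ℝ≥0∞) (b : ℝ → ℝ) (f : E) :
    normK N₀ N₁ θ q b f = WN q (Ioi 0) (fun u => ENNReal.ofReal (u ^ (-θ) * b u) *
      Kf N₀ N₁ u f) := by
  unfold normK WN
  refine LqNorm_congr measurableSet_Ioi fun u hu => ?_
  have hu' : (0 : ℝ) < u := hu
  rw [← mul_assoc, ← ENNReal.ofReal_mul (by positivity), sub_eq_add_neg, add_comm,
    Real.rpow_add hu', mul_assoc]

lemma normL_eq (N₀ N₁ : E → ℝ≥0∞) (σ : ℝ) (r q : ℝ≥0∞) (b a : ℝ → ℝ) (f : E) :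
    normL N₀ N₁ σ r q b a f = WN r (Ioi 0) (fun t => ENNReal.ofReal (b t / a t) *
      WN q (Ioo 0 t) (fun u => ENNReal.ofReal (u ^ (-σ) * a u) * Kf N₀ N₁ u f)) := by
  unfold normL WN
  refine LqNorm_congr measurableSet_Ioi fun t ht => ?_
  have ht' : (0 : ℝ) < t := ht
  rw [← mul_assoc, ← ENNReal.ofReal_mul (by positivity)]
  congr 1
  refine LqNorm_congr measurableSet_Ioo fun u hu => ?_
  have hu' : (0 : ℝ) < u := hu.1
  rw [← mul_assoc, ← ENNReal.ofReal_mul (by positivity), sub_eq_add_neg, add_comm,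
    Real.rpow_add hu', mul_assoc]

lemma normR_eq (N₀ N₁ : E → ℝ≥0∞) (σ : ℝ) (r q : ℝ≥0∞) (b a : ℝ → ℝ) (f : E) :
    normR N₀ N₁ σ r q b a f = WN r (Ioi 0) (fun t => ENNReal.ofReal (b t / a t) *
      WN q (Ioi t) (fun u => ENNReal.ofReal (u ^ (-σ) * a u) * Kf N₀ N₁ u f)) := by
  unfold normR WN
  refine LqNorm_congr measurableSet_Ioi fun t ht => ?_
  have ht' : (0 : ℝ) < t := ht
  rw [← mul_assoc, ← ENNReal.ofReal_mul (by positivity)]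
  congr 1
  refine LqNorm_congr measurableSet_Ioi fun u hu => ?_
  have hu' : (0 : ℝ) < u := ht'.trans hu
  rw [← mul_assoc, ← ENNReal.ofReal_mul (by positivity), sub_eq_add_neg, add_comm,
    Real.rpow_add hu', mul_assoc]

/-! ## Change of variables -/

lemma logb_bound {ρ : ℤ → ℝ} (hρ : ∀ k, 0 < ρ k) {Δ : ℝ} (hΔ : 0 < Δ)
    (h : Idx (fun k => ENNReal.ofReal (ρ k)) Δ) :
    ∃ D : ℝ, 0 ≤ D ∧ ∀ k j : ℤ, Real.logb 2 (ρ k) ≤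
      D + Δ * ((k : ℝ) - j) + Δ / 2 * |(k : ℝ) - j| + Real.logb 2 (ρ j) := by
  obtain ⟨C, hC, h⟩ := h (Δ / 2) (by positivity)
  obtain ⟨D, hD, hCD⟩ := exists_le_P2 hC
  refine ⟨D, hD, fun k j => ?_⟩
  have h1 : ENNReal.ofReal (ρ k) ≤ ENNReal.ofReal ((2 : ℝ) ^
      (D + (Δ * ((k : ℝ) - j) + Δ / 2 * |(k : ℝ) - j|)) * ρ j) := by
    rw [ENNReal.ofReal_mul (by positivity), ← P2_eq, P2_add D]
    refine (h k j).trans ?_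
    gcongr
  rw [ENNReal.ofReal_le_ofReal_iff (by have := hρ j; positivity)] at h1
  have h2 := Real.logb_le_logb_of_le (by norm_num : (1 : ℝ) < 2) (hρ k) h1
  rw [Real.logb_mul (by positivity) (hρ j).ne', Real.logb_rpow (by norm_num) (by norm_num)] at h2
  linarith

lemma exists_near {L : ℤ → ℝ} {Δ D : ℝ} (hΔ : 0 < Δ)
    (h : ∀ k j : ℤ, L k ≤ D + Δ * ((k : ℝ) - j) + Δ / 2 * |(k : ℝ) - j| + L j) (m : ℤ) :
    ∃ k : ℤ, |L k - m| ≤ D + 3 / 2 * Δ := by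
  have H1 : ∃ b : ℤ, ∀ z : ℤ, (m : ℝ) ≤ L z → b ≤ z := by
    refine ⟨min 0 ⌊2 * (m - D - L 0) / Δ⌋, fun z hz => ?_⟩
    rcases le_total 0 z with h0 | h0
    · exact (min_le_left _ _).trans h0
    · refine (min_le_right _ _).trans ?_
      have h1 := h z 0
      have hz0 : (z : ℝ) ≤ 0 := by exact_mod_cast h0
      rw [Int.cast_zero, sub_zero, abs_of_nonpos hz0] at h1
      have h2 : 2 * (m - D - L 0) / Δ ≤ z := by
        rw [div_le_iff₀ hΔ]
        linarith
      have := (Int.floor_le _).trans h2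
      exact_mod_cast this
  have H2 : ∃ z : ℤ, (m : ℝ) ≤ L z := by
    refine ⟨max 0 ⌈2 * (m + D - L 0) / Δ⌉, ?_⟩
    set j := max 0 ⌈2 * (m + D - L 0) / Δ⌉ with hj
    have h0 : (0 : ℝ) ≤ j := by exact_mod_cast le_max_left _ _
    have h1 : 2 * (m + D - L 0) / Δ ≤ j := by
      refine (Int.le_ceil _).trans ?_
      exact_mod_cast le_max_right _ _
    rw [div_le_iff₀ hΔ] at h1
    have h2 := h 0 j
    rw [Int.cast_zero, zero_sub, abs_neg, abs_of_nonneg h0] at h2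
    linarith
  obtain ⟨k, hk, hmin⟩ := Int.exists_least_of_bdd (P := fun k => (m : ℝ) ≤ L k) H1 H2
  · refine ⟨k, ?_⟩
    have h1 : L (k - 1) < m := by
      by_contra hh
      have := hmin (k - 1) (not_lt.1 hh)
      omega
    have h2 := h k (k - 1)
    push_cast at h2
    have e : (k : ℝ) - (k - 1) = 1 := by ring
    rw [e, abs_one] at h2
    rw [abs_of_nonneg (by linarith)]
    linarith

lemma ratio_of_log {x y R : ℝ} (hx : 0 < x) (hy : 0 < y)
    (h : |Real.logb 2 x - Real.logb 2 y| ≤ R) : x ≤ (2 : ℝ) ^ R * y := by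
  have h1 : Real.logb 2 x ≤ R + Real.logb 2 y := by linarith [le_abs_self (Real.logb 2 x - Real.logb 2 y)]
  rw [Real.logb_le_iff_le_rpow (by norm_num) hx, Real.rpow_add (by norm_num),
    Real.rpow_logb (by norm_num) (by norm_num) hy] at h1
  exact h1

lemma logb_dy (k : ℤ) : Real.logb 2 (dy k) = k := by
  unfold dy
  rw [Real.logb_rpow (by norm_num) (by norm_num)]

lemma change_var {v : ι → ℝ → ℝ≥0∞} (hv : MReg v) {ρ : ℤ → ℝ} (hρ : ∀ k, 0 < ρ k) {Δ : ℝ}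
    (hΔ : 0 < Δ) (h : Idx (fun k => ENNReal.ofReal (ρ k)) Δ) {r : ℝ≥0∞} (hr : 0 < r) :
    LeC (fun i => dN r (fun m => v i (dy m))) (fun i => dN r (fun k => v i (ρ k))) ∧
    LeC (fun i => dN r (fun k => v i (ρ k))) (fun i => dN r (fun m => v i (dy m))) := by
  obtain ⟨D, hD, hL⟩ := logb_bound hρ hΔ h
  set L : ℤ → ℝ := fun k => Real.logb 2 (ρ k) with hLdef
  choose φ hφ using exists_near hΔ hL
  set R := D + 3 / 2 * Δ with hR
  have hR0 : 0 ≤ R := by positivity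
  obtain ⟨C, hC, hschur⟩ := dN_schur hr (one_pos (α := ℝ))
  obtain ⟨G, hG, hvG⟩ := hv ((2 : ℝ) ^ (R + 1)) (Real.one_le_rpow (by norm_num) (by positivity))
  have hvR : ∀ i s t, 0 < s → 0 < t → |Real.logb 2 s - Real.logb 2 t| ≤ R + 1 →
      v i s ≤ G * v i t := by
    intro i s t hs ht hst
    exact hvG i s t hs ht (ratio_of_log hs ht hst)
      (ratio_of_log ht hs (by rw [abs_sub_comm]; exact hst))
  constructor
  · refine ⟨C * (P2 (R + 1) * G), by have := P2_ne_top (R + 1); finiteness, fun i => ?_⟩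
    rw [mul_assoc, ← dN_const_mul hr]
    refine hschur (fun k => ⌊L k⌋) _ _ fun m => ?_
    refine le_trans ?_ (le_iSup _ (φ m))
    have h1 := hφ m
    have h2 : |(m : ℝ) - ⌊L (φ m)⌋| ≤ R + 1 := by
      have a1 := Int.floor_le (L (φ m))
      have a2 := Int.lt_floor_add_one (L (φ m))
      rw [abs_le] at h1 ⊢
      constructor <;> linarith
    have h3 : v i (dy m) ≤ G * v i (ρ (φ m)) := by
      refine hvR i _ _ (dy_pos m) (hρ _) ?_
      rw [logb_dy, abs_sub_comm]
      linarith
    calc v i (dy m) ≤ G * v i (ρ (φ m)) := h3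
      _ ≤ P2 (-1 * |(m : ℝ) - ⌊L (φ m)⌋| + (R + 1)) * (G * v i (ρ (φ m))) :=
          le_P2_mul (by linarith) _
      _ = _ := by rw [P2_add]; ring
  · set R' := (R + 1 + D) * (2 / Δ) with hR'
    refine ⟨C * (P2 R' * G), by have := P2_ne_top R'; finiteness, fun i => ?_⟩
    rw [mul_assoc, ← dN_const_mul hr]
    refine hschur φ _ _ fun k => ?_
    set m := ⌊L k⌋ with hm
    refine le_trans ?_ (le_iSup _ m)
    have h1 := hφ m
    have a1 := Int.floor_le (L k)
    have a2 := Int.lt_floor_add_one (L k)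
    rw [← hm] at a1 a2
    have h2 : |L k - L (φ m)| ≤ R + 1 := by
      rw [abs_le] at h1 ⊢
      constructor <;> linarith
    have h4 : |(k : ℝ) - φ m| ≤ R' := by
      have b1 := hL (φ m) k
      have b2 := hL k (φ m)
      rw [abs_le] at h2
      rw [hR', mul_div_assoc', le_div_iff₀ hΔ]
      rcases le_total (0 : ℝ) ((k : ℝ) - φ m) with h0 | h0
      · rw [abs_sub_comm] at b1
        rw [abs_of_nonneg h0] at b1 ⊢
        linarith
      · rw [abs_of_nonpos h0] at b2 ⊢
        linarith
    have h3 : v i (ρ k) ≤ G * v i (dy m) := by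
      refine hvR i _ _ (hρ _) (dy_pos m) ?_
      rw [logb_dy]
      change |L k - m| ≤ R + 1
      rw [abs_le]
      constructor <;> linarith
    calc v i (ρ k) ≤ G * v i (dy m) := h3
      _ ≤ P2 (-1 * |(k : ℝ) - φ m| + R') * (G * v i (dy m)) :=
          le_P2_mul (by linarith) _
      _ = _ := by rw [P2_add]; ring

end


/-! ## The discrete core -/

lemma Idx.left {w : ℤ → ℝ≥0∞} {s t : ℝ} (h : Idx w s) (ht : t < s) :
    ∃ C : ℝ≥0∞, C ≠ ∞ ∧ ∀ j k : ℤ, j ≤ k → w j ≤ C * P2 (-t * ((k : ℝ) - j)) * w k := by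
  obtain ⟨C, hC, h⟩ := h (s - t) (by linarith)
  refine ⟨C, hC, fun j k hjk => ?_⟩
  have hjk' : (j : ℝ) ≤ k := by exact_mod_cast hjk
  refine (h j k).trans (le_of_eq ?_)
  rw [abs_of_nonpos (by linarith)]
  congr 3
  ring

lemma Idx.right {w : ℤ → ℝ≥0∞} {s t : ℝ} (h : Idx w s) (ht : s < t) :
    ∃ C : ℝ≥0∞, C ≠ ∞ ∧ ∀ j k : ℤ, k ≤ j → w j ≤ C * P2 (t * ((j : ℝ) - k)) * w k := by
  obtain ⟨C, hC, h⟩ := h (t - s) (by linarith)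
  refine ⟨C, hC, fun j k hjk => ?_⟩
  have hjk' : (k : ℝ) ≤ j := by exact_mod_cast hjk
  refine (h j k).trans (le_of_eq ?_)
  rw [abs_of_nonneg (by linarith)]
  congr 3
  ring

/-- The discrete data of the problem. -/
structure DD where
  u : ℤ → ℝ≥0∞
  β : ℤ → ℝ≥0∞
  v : ℤ → ℝ≥0∞
  θ₀ : ℝ
  θ₁ : ℝ
  q₀ : ℝ≥0∞
  r₀ : ℝ≥0∞
  r₁ : ℝ≥0∞
  hθ₀ : 0 < θ₀
  hθ : θ₀ < θ₁
  hθ₁ : θ₁ < 1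
  hq₀ : 0 < q₀
  hr₀ : 0 < r₀
  hr₁ : 0 < r₁
  hu : Idx u (-θ₀)
  hβ : Idx β 0
  hv : Idx v (-θ₁)
  u0 : ∀ k, u k ≠ 0
  uT : ∀ k, u k ≠ ∞
  v0 : ∀ k, v k ≠ 0
  vT : ∀ k, v k ≠ ∞
  B0 : ∀ k, dN r₀ (fun j => if k ≤ j then β j else 0) ≠ 0
  BT : ∀ k, dN r₀ (fun j => if k ≤ j then β j else 0) ≠ ∞

namespace DD

variable (d : DD)

def B (k : ℤ) : ℝ≥0∞ := dN d.r₀ (fun j => if k ≤ j then d.β j else 0)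
def c (k : ℤ) : ℝ≥0∞ := d.u k * d.B k
def R (k : ℤ) : ℝ≥0∞ := d.c k * (d.v k)⁻¹
def X0 (κ : ℤ → ℝ≥0∞) : ℝ≥0∞ :=
  dN d.r₀ (fun i => d.β i * dN d.q₀ (fun j => if j ≤ i then d.u j * κ j else 0))
def X1 (κ : ℤ → ℝ≥0∞) : ℝ≥0∞ := dN d.r₁ (fun j => d.v j * κ j)
def T (κ : ℤ → ℝ≥0∞) (k : ℤ) : ℝ≥0∞ := dN d.r₁ (fun j => if k ≤ j then d.v j * κ j else 0)
def S (δ : ℝ) (κ : ℤ → ℝ≥0∞) (k : ℤ) : ℝ≥0∞ :=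
  ⨆ j : ℤ, if j ≤ k then P2 (-(d.θ₁ - d.θ₀ - δ) * ((k : ℝ) - j)) * (d.v j * κ j) else 0

lemma hB : Idx d.B 0 := d.hβ.tail d.hr₀
lemma hc : Idx d.c (-d.θ₀) := by
  have := d.hu.mul d.hB
  rw [add_zero] at this
  exact this
lemma hR : Idx d.R (d.θ₁ - d.θ₀) := by
  have := d.hc.mul d.hv.inv
  rw [show -d.θ₀ + - -d.θ₁ = d.θ₁ - d.θ₀ by ring] at this
  exact this
lemma B0' (k : ℤ) : d.B k ≠ 0 := d.B0 k
lemma BT' (k : ℤ) : d.B k ≠ ∞ := d.BT k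
lemma c0 (k : ℤ) : d.c k ≠ 0 := mul_ne_zero (d.u0 k) (d.B0 k)
lemma cT (k : ℤ) : d.c k ≠ ∞ := ENNReal.mul_ne_top (d.uT k) (d.BT k)
lemma R0 (k : ℤ) : d.R k ≠ 0 := mul_ne_zero (d.c0 k) (ENNReal.inv_ne_zero.2 (d.vT k))
lemma RT (k : ℤ) : d.R k ≠ ∞ := ENNReal.mul_ne_top (d.cT k) (ENNReal.inv_ne_top.2 (d.v0 k))
lemma Rv (k : ℤ) : d.R k * d.v k = d.c k := by
  unfold R
  rw [mul_assoc, ENNReal.inv_mul_cancel (d.v0 k) (d.vT k), mul_one]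

lemma le_T (κ : ℤ → ℝ≥0∞) (k : ℤ) : d.v k * κ k ≤ d.T κ k := by
  have := le_dN d.hr₁ (fun j => if k ≤ j then d.v j * κ j else 0) k
  simp only [le_refl, if_true] at this
  exact this

lemma le_S (δ : ℝ) (κ : ℤ → ℝ≥0∞) {j k : ℤ} (h : j ≤ k) :
    P2 (-(d.θ₁ - d.θ₀ - δ) * ((k : ℝ) - j)) * (d.v j * κ j) ≤ d.S δ κ k := by
  have := le_iSup (fun j : ℤ => if j ≤ k then
    P2 (-(d.θ₁ - d.θ₀ - δ) * ((k : ℝ) - j)) * (d.v j * κ j) else 0) j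
  simp only [h, if_true] at this
  exact this

lemma le_S' (δ : ℝ) (κ : ℤ → ℝ≥0∞) (k : ℤ) : d.v k * κ k ≤ d.S δ κ k := by
  have := d.le_S δ κ (le_refl k)
  simpa [P2_zero] using this

lemma L1 (κ : ℤ → ℝ≥0∞) (k : ℤ) : d.c k * κ k ≤ d.X0 κ := by
  have : d.c k * κ k = dN d.r₀ (fun i => (d.u k * κ k) * if k ≤ i then d.β i else 0) := by
    rw [dN_const_mul d.hr₀]
    show d.u k * d.B k * κ k = d.u k * κ k * d.B k
    ring
  rw [this]
  refine dN_mono fun i => ?_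
  split_ifs with h
  · rw [mul_comm]
    refine mul_le_mul' le_rfl ?_
    have := le_dN d.hq₀ (fun j => if j ≤ i then d.u j * κ j else 0) k
    simpa [h] using this
  · simp

lemma T_le_X1 (κ : ℤ → ℝ≥0∞) (k : ℤ) : d.T κ k ≤ d.X1 κ := by
  refine dN_mono fun j => ?_
  split_ifs
  · exact le_rfl
  · exact zero_le

/-- The tail of a sequence controlled by `X0`. -/
lemma RT_le : ∃ C : ℝ≥0∞, C ≠ ∞ ∧ ∀ κ k, d.R k * d.T κ k ≤ C * d.X0 κ := by
  have hΔ : 0 < (d.θ₁ - d.θ₀) / 2 := by linarith [d.hθ]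
  obtain ⟨C, hC, h⟩ := d.hR.inv.right (t := -((d.θ₁ - d.θ₀) / 2)) (by linarith)
  obtain ⟨D, hD, hg⟩ := dN_geo d.hr₁ hΔ
  refine ⟨D * C, ENNReal.mul_ne_top hD hC, fun κ k => ?_⟩
  have h1 : d.T κ k ≤ D * (C * (d.R k)⁻¹ * d.X0 κ) := by
    refine hg k _ _ fun j => ?_
    split_ifs with hj
    · have hj' : (k : ℝ) ≤ j := by exact_mod_cast hj
      have e : d.v j * κ j = (d.R j)⁻¹ * (d.c j * κ j) := by
        rw [← d.Rv j, ← mul_assoc, ← mul_assoc, ENNReal.inv_mul_cancel (d.R0 j) (d.RT j), one_mul]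
      rw [e, abs_of_nonneg (by linarith)]
      calc (d.R j)⁻¹ * (d.c j * κ j) ≤ (C * P2 (-((d.θ₁ - d.θ₀) / 2) * ((j : ℝ) - k)) * (d.R k)⁻¹) *
            d.X0 κ := mul_le_mul' (h j k hj) (d.L1 κ j)
        _ = _ := by
          generalize P2 (-((d.θ₁ - d.θ₀) / 2) * ((j : ℝ) - k)) = p
          ring
    · exact zero_le
  calc d.R k * d.T κ k ≤ d.R k * (D * (C * (d.R k)⁻¹ * d.X0 κ)) := mul_le_mul' le_rfl h1
    _ = (d.R k * (d.R k)⁻¹) * (D * C * d.X0 κ) := by ring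
    _ = _ := by rw [ENNReal.mul_inv_cancel (d.R0 k) (d.RT k), one_mul]

lemma T_mono {κ κ' : ℤ → ℝ≥0∞} (h : ∀ j, κ j ≤ κ' j) (k : ℤ) : d.T κ k ≤ d.T κ' k := by
  refine dN_mono fun j => ?_
  split_ifs
  · exact mul_le_mul' le_rfl (h j)
  · exact zero_le

lemma T_add : ∃ C : ℝ≥0∞, C ≠ ∞ ∧ ∀ (D : ℝ≥0∞) κ κ' k,
    d.T (fun j => D * (κ j + κ' j)) k ≤ C * D * (d.T κ k + d.T κ' k) := by
  obtain ⟨C, hC, h⟩ := dN_add d.hr₁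
  refine ⟨C, hC, fun D κ κ' k => ?_⟩
  calc d.T (fun j => D * (κ j + κ' j)) k
      = dN d.r₁ (fun j => D * ((if k ≤ j then d.v j * κ j else 0) +
          if k ≤ j then d.v j * κ' j else 0)) := by
        unfold T
        congr 1
        ext j
        split_ifs
        · ring
        · simp
    _ ≤ _ := by
        rw [dN_const_mul d.hr₁]
        refine (mul_le_mul' le_rfl (h _ _)).trans (le_of_eq ?_)
        unfold T
        ring

lemma X0_le {δ : ℝ} (hδ : 0 < δ) : ∃ C : ℝ≥0∞, C ≠ ∞ ∧ ∀ (κ : ℤ → ℝ≥0∞) (k : ℤ) (M : ℝ≥0∞),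
    (∀ j, d.c j * κ j ≤ M * P2 (-δ * |(j : ℝ) - k|)) → d.X0 κ ≤ C * M := by
  obtain ⟨C1, hC1, h1⟩ := d.hB.inv (δ / 2) (by linarith)
  obtain ⟨D, hD, hg⟩ := dN_geo d.hq₀ (half_pos hδ)
  obtain ⟨F, hF, hg'⟩ := dN_geo d.hr₀ hδ
  obtain ⟨G, hG, ha⟩ := dN_add d.hr₀
  refine ⟨G * (F * (D * C1) + D * C1), by finiteness, fun κ k M hM => ?_⟩
  have hu : ∀ j, d.u j * κ j ≤ M * P2 (-δ * |(j : ℝ) - k|) * (d.B j)⁻¹ := by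
    intro j
    have e : d.u j * κ j = (d.c j * κ j) * (d.B j)⁻¹ := by
      have : d.B j * (d.B j)⁻¹ = 1 := ENNReal.mul_inv_cancel (d.B0' j) (d.BT' j)
      calc d.u j * κ j = d.u j * κ j * (d.B j * (d.B j)⁻¹) := by rw [this, mul_one]
        _ = _ := by unfold c; ring
    rw [e]
    exact mul_le_mul' (hM j) le_rfl
  -- inner estimates
  have hin : ∀ i : ℤ, i ≤ k → dN d.q₀ (fun j => if j ≤ i then d.u j * κ j else 0) ≤
      D * (C1 * M * P2 (-δ * |(i : ℝ) - k|) * (d.B i)⁻¹) := by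
    intro i hi
    refine hg i _ _ fun j => ?_
    split_ifs with hj
    · have hi' : (i : ℝ) ≤ k := by exact_mod_cast hi
      have hj' : (j : ℝ) ≤ i := by exact_mod_cast hj
      refine (hu j).trans ?_
      have e : -δ * |(j : ℝ) - k| + (-0 * ((j : ℝ) - i) + δ / 2 * |(j : ℝ) - i|) =
          -δ * |(i : ℝ) - k| + -(δ / 2) * |(j : ℝ) - i| := by
        rw [abs_of_nonpos (by linarith : (j : ℝ) - k ≤ 0), abs_of_nonpos (by linarith : (i : ℝ) - k ≤ 0),
          abs_of_nonpos (by linarith : (j : ℝ) - i ≤ 0)]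
        ring
      have e2 := congrArg P2 e
      rw [P2_add (-δ * |(j : ℝ) - k|), P2_add (-δ * |(i : ℝ) - k|)] at e2
      calc M * P2 (-δ * |(j : ℝ) - k|) * (d.B j)⁻¹
          ≤ M * P2 (-δ * |(j : ℝ) - k|) *
            (C1 * P2 (-0 * ((j : ℝ) - i) + δ / 2 * |(j : ℝ) - i|) * (d.B i)⁻¹) :=
            mul_le_mul' le_rfl (h1 j i)
        _ = C1 * M * (d.B i)⁻¹ * (P2 (-δ * |(j : ℝ) - k|) *
            P2 (-0 * ((j : ℝ) - i) + δ / 2 * |(j : ℝ) - i|)) := by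
            generalize P2 (-0 * ((j : ℝ) - i) + δ / 2 * |(j : ℝ) - i|) = p
            generalize P2 (-δ * |(j : ℝ) - k|) = p'
            ring
        _ = _ := by
            rw [e2]
            generalize P2 (-δ * |(i : ℝ) - k|) = p
            generalize P2 (-(δ / 2) * |(j : ℝ) - i|) = p'
            ring
    · exact zero_le
  have hin2 : ∀ i : ℤ, dN d.q₀ (fun j => if j ≤ i then d.u j * κ j else 0) ≤
      D * (C1 * M * (d.B k)⁻¹) := by
    intro i
    refine hg k _ _ fun j => ?_
    split_ifs with hj
    · refine (hu j).trans ?_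
      have e : -δ * |(j : ℝ) - k| + (-0 * ((j : ℝ) - k) + δ / 2 * |(j : ℝ) - k|) =
          -(δ / 2) * |(j : ℝ) - k| := by ring
      have e2 := congrArg P2 e
      rw [P2_add (-δ * |(j : ℝ) - k|)] at e2
      calc M * P2 (-δ * |(j : ℝ) - k|) * (d.B j)⁻¹
          ≤ M * P2 (-δ * |(j : ℝ) - k|) *
            (C1 * P2 (-0 * ((j : ℝ) - k) + δ / 2 * |(j : ℝ) - k|) * (d.B k)⁻¹) :=
            mul_le_mul' le_rfl (h1 j k)
        _ = C1 * M * (d.B k)⁻¹ * (P2 (-δ * |(j : ℝ) - k|) *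
            P2 (-0 * ((j : ℝ) - k) + δ / 2 * |(j : ℝ) - k|)) := by
            generalize P2 (-0 * ((j : ℝ) - k) + δ / 2 * |(j : ℝ) - k|) = p
            generalize P2 (-δ * |(j : ℝ) - k|) = p'
            ring
        _ = _ := by rw [e2]
    · exact zero_le
  have hout : d.X0 κ ≤ dN d.r₀ (fun i => (D * C1 * M) * P2 (-δ * |(i : ℝ) - k|) +
      (D * C1 * M * (d.B k)⁻¹) * if k ≤ i then d.β i else 0) := by
    refine dN_mono fun i => ?_
    rcases lt_or_ge i k with hi | hi
    · refine le_trans ?_ (le_add_of_nonneg_right zero_le)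
      have hb : d.β i ≤ d.B i := by
        have := le_dN d.hr₀ (fun j => if i ≤ j then d.β j else 0) i
        simp only [le_refl, if_true] at this
        exact this
      calc _ ≤ d.B i * (D * (C1 * M * P2 (-δ * |(i : ℝ) - k|) * (d.B i)⁻¹)) :=
            mul_le_mul' hb (hin i hi.le)
        _ = (d.B i * (d.B i)⁻¹) * ((D * C1 * M) * P2 (-δ * |(i : ℝ) - k|)) := by
            generalize P2 (-δ * |(i : ℝ) - k|) = p
            ring
        _ = _ := by rw [ENNReal.mul_inv_cancel (d.B0' i) (d.BT' i), one_mul]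
    · refine le_trans ?_ (le_add_of_nonneg_left zero_le)
      rw [if_pos hi, mul_comm]
      refine mul_le_mul' ((hin2 i).trans (le_of_eq (by ring))) le_rfl
  refine hout.trans ((ha _ _).trans ?_)
  rw [mul_assoc G]
  refine mul_le_mul' le_rfl ?_
  rw [add_mul]
  refine add_le_add ?_ ?_
  · refine (hg' k (D * C1 * M) _ fun j => le_rfl).trans (le_of_eq (by ring))
  · rw [dN_const_mul d.hr₀]
    show D * C1 * M * (d.B k)⁻¹ * d.B k ≤ _
    rw [mul_assoc, ENNReal.inv_mul_cancel (d.B0' k) (d.BT' k), mul_one]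

end DD

lemma QB_neg (A : QuasiBanach E) (x : E) : A.N (-x) = A.N x := by
  have := A.smul (-1) x
  simpa using this

/-- The sampled K-functional. -/
def KK (A₀ A₁ : QuasiBanach E) (f : E) (j : ℤ) : ℝ≥0∞ := Kf A₀.N A₁.N (dy j) f

namespace DD

variable (d : DD) (A₀ A₁ : QuasiBanach E)

lemma L3 (P : ℝ≥0∞) (hP : P ≠ ∞) : ∃ C : ℝ≥0∞, C ≠ ∞ ∧ ∀ (f : E) (k : ℤ) (t : ℝ),
    d.R k ≤ P * ENNReal.ofReal t →
    d.R k * d.T (KK A₀ A₁ f) k ≤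
      C * Kf (fun g => d.X0 (KK A₀ A₁ g)) (fun g => d.X1 (KK A₀ A₁ g)) t f := by
  obtain ⟨C, hC, hadd⟩ := Kf_add A₀ A₁
  obtain ⟨D, hD, hT⟩ := d.T_add
  obtain ⟨F, hF, hR⟩ := d.RT_le
  refine ⟨D * C * (F + P), by finiteness, fun f k t ht => ?_⟩
  unfold Kf
  by_cases hz : D * C * (F + P) = 0
  · have h1 : d.T (KK A₀ A₁ f) k ≤ D * C * (d.T (KK A₀ A₁ f) k + d.T (KK A₀ A₁ 0) k) := by
      refine le_trans (d.T_mono (fun j => ?_) k) (hT C _ _ k)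
      have := hadd (dy j) f 0
      rw [add_zero] at this
      exact this
    rcases mul_eq_zero.1 hz with h | h
    · rw [h, zero_mul] at h1
      rw [nonpos_iff_eq_zero.1 h1, mul_zero]; exact zero_le
    · have : P = 0 := (add_eq_zero.1 h).2
      rw [this, zero_mul] at ht
      exact absurd (nonpos_iff_eq_zero.1 ht) (d.R0 k)
  rw [ENNReal.mul_iInf_of_ne hz (by finiteness)]
  refine le_iInf fun g => ?_
  have h1 : d.T (KK A₀ A₁ f) k ≤ D * C * (d.T (KK A₀ A₁ g) k + d.T (KK A₀ A₁ (f - g)) k) := by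
    refine le_trans (d.T_mono (fun j => ?_) k) (hT C _ _ k)
    have := hadd (dy j) g (f - g)
    rw [add_sub_cancel] at this
    exact this
  calc d.R k * d.T (KK A₀ A₁ f) k
      ≤ d.R k * (D * C * (d.T (KK A₀ A₁ g) k + d.T (KK A₀ A₁ (f - g)) k)) :=
        mul_le_mul' le_rfl h1
    _ = D * C * (d.R k * d.T (KK A₀ A₁ g) k + d.R k * d.T (KK A₀ A₁ (f - g)) k) := by ring
    _ ≤ D * C * (F * d.X0 (KK A₀ A₁ g) + P * ENNReal.ofReal t * d.X1 (KK A₀ A₁ (f - g))) :=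
        mul_le_mul' le_rfl (add_le_add (hR _ _) (mul_le_mul' ht (d.T_le_X1 _ _)))
    _ ≤ D * C * ((F + P) * d.X0 (KK A₀ A₁ g) +
          (F + P) * (ENNReal.ofReal t * d.X1 (KK A₀ A₁ (f - g)))) := by
        refine mul_le_mul' le_rfl (add_le_add (mul_le_mul' le_self_add le_rfl) ?_)
        rw [mul_assoc]
        exact mul_le_mul' le_add_self le_rfl
    _ = _ := by ring

lemma U_core {δ : ℝ} (hδ : 0 < δ) : ∃ C : ℝ≥0∞, C ≠ ∞ ∧ ∀ (f g : E) (k : ℤ) (κ : ℤ → ℝ≥0∞),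
    (∀ j, KK A₀ A₁ f j ≤ κ j) → (∀ j, j ≤ k → κ k ≤ P2 ((k : ℝ) - j) * κ j) →
    (∀ j, k ≤ j → κ k ≤ κ j) → A₀.N g + P2 k * A₁.N (f - g) ≤ 2 * κ k →
    d.X0 (KK A₀ A₁ g) ≤ C * (d.R k * d.S δ κ k) ∧ d.X1 (KK A₀ A₁ (f - g)) ≤ C * d.T κ k := by
  obtain ⟨C, hC, hadd⟩ := Kf_add A₀ A₁
  have h0 := d.hθ₀
  have h1 := d.hθ₁
  set δ' := min (δ / 2) (d.θ₀ / 2) with hδ'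
  have hδ'0 : 0 < δ' := lt_min (by linarith) (by linarith)
  obtain ⟨F, hF, hX0⟩ := d.X0_le hδ'0
  obtain ⟨C1, hC1, hRl⟩ := d.hR.left (t := d.θ₁ - d.θ₀ - δ / 2) (by linarith)
  obtain ⟨C2, hC2, hcr⟩ := d.hc.right (t := -(d.θ₀ / 2)) (by linarith)
  obtain ⟨C3, hC3, hvl⟩ := d.hv.left (t := -1 + (1 - d.θ₁) / 2) (by linarith)
  obtain ⟨G, hG, hgeo⟩ := dN_geo d.hr₁ (δ := (1 - d.θ₁) / 2) (by linarith)
  obtain ⟨H, hH, hdadd⟩ := dN_add d.hr₁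
  refine ⟨F * (3 * C * C1 + 2 * C2) + H * (3 * C + G * (2 * C3)), by finiteness,
    fun f g k κ hf hl hr hg => ?_⟩
  have hg0 : A₀.N g ≤ 2 * κ k := le_self_add.trans hg
  have hg1 : P2 k * A₁.N (f - g) ≤ 2 * κ k := le_add_self.trans hg
  have hfg : ∀ j : ℤ, P2 j * A₁.N (f - g) ≤ P2 ((j : ℝ) - k) * (2 * κ k) := by
    intro j
    calc P2 j * A₁.N (f - g) = P2 ((j : ℝ) - k) * (P2 k * A₁.N (f - g)) := by
          rw [← mul_assoc, ← P2_add]; congr 2; ring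
      _ ≤ _ := mul_le_mul' le_rfl hg1
  have kg1 : ∀ j, KK A₀ A₁ g j ≤ 2 * κ k := fun j => (Kf_le_left A₀ A₁ _ _).trans hg0
  have kg2 : ∀ j, j ≤ k → KK A₀ A₁ g j ≤ 3 * C * κ j := by
    intro j hj
    have := hadd (dy j) f (g - f)
    rw [add_sub_cancel] at this
    refine this.trans ?_
    have h2 : Kf A₀.N A₁.N (dy j) (g - f) ≤ 2 * κ j := by
      refine (Kf_le_right A₀ A₁ _ _).trans ?_
      rw [ofReal_dy, ← neg_sub f g, QB_neg]
      refine (hfg j).trans ?_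
      calc P2 ((j : ℝ) - k) * (2 * κ k) ≤ P2 ((j : ℝ) - k) * (2 * (P2 ((k : ℝ) - j) * κ j)) :=
            mul_le_mul' le_rfl (mul_le_mul' le_rfl (hl j hj))
        _ = P2 ((j : ℝ) - k) * P2 ((k : ℝ) - j) * (2 * κ j) := by ring
        _ = _ := by
          rw [← P2_add, show (j : ℝ) - k + (k - j) = 0 by ring, P2_zero, one_mul]
    calc C * (Kf A₀.N A₁.N (dy j) f + Kf A₀.N A₁.N (dy j) (g - f)) ≤ C * (κ j + 2 * κ j) :=
          mul_le_mul' le_rfl (add_le_add (hf j) h2)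
      _ = _ := by ring
  have kh1 : ∀ j, KK A₀ A₁ (f - g) j ≤ P2 ((j : ℝ) - k) * (2 * κ k) := by
    intro j
    refine (Kf_le_right A₀ A₁ _ _).trans ?_
    rw [ofReal_dy]
    exact hfg j
  have kh2 : ∀ j, k ≤ j → KK A₀ A₁ (f - g) j ≤ 3 * C * κ j := by
    intro j hj
    have := hadd (dy j) f (-g)
    rw [← sub_eq_add_neg] at this
    refine this.trans ?_
    have h2 : Kf A₀.N A₁.N (dy j) (-g) ≤ 2 * κ j := by
      refine (Kf_le_left A₀ A₁ _ _).trans ?_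
      rw [QB_neg]
      exact hg0.trans (mul_le_mul' le_rfl (hr j hj))
    calc C * (Kf A₀.N A₁.N (dy j) f + Kf A₀.N A₁.N (dy j) (-g)) ≤ C * (κ j + 2 * κ j) :=
          mul_le_mul' le_rfl (add_le_add (hf j) h2)
      _ = _ := by ring
  constructor
  · have := hX0 (KK A₀ A₁ g) k ((3 * C * C1 + 2 * C2) * (d.R k * d.S δ κ k)) fun j => ?_
    · refine this.trans ?_
      rw [← mul_assoc]
      exact mul_le_mul' le_self_add le_rfl
    rcases le_total j k with hj | hj
    · have hj' : (j : ℝ) ≤ k := by exact_mod_cast hj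
      rw [abs_of_nonpos (by linarith)]
      calc d.c j * KK A₀ A₁ g j ≤ d.c j * (3 * C * κ j) := mul_le_mul' le_rfl (kg2 j hj)
        _ = 3 * C * (d.R j * (d.v j * κ j)) := by rw [← d.Rv]; ring
        _ ≤ 3 * C * ((C1 * P2 (-(d.θ₁ - d.θ₀ - δ / 2) * ((k : ℝ) - j)) * d.R k) *
              (d.v j * κ j)) :=
            mul_le_mul' le_rfl (mul_le_mul' (hRl j k hj) le_rfl)
        _ = 3 * C * C1 * (d.R k * (P2 (-(d.θ₁ - d.θ₀ - δ) * ((k : ℝ) - j)) * (d.v j * κ j))) *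
              P2 (-(δ / 2) * ((k : ℝ) - j)) := by
            rw [show -(d.θ₁ - d.θ₀ - δ / 2) * ((k : ℝ) - j) =
              -(d.θ₁ - d.θ₀ - δ) * ((k : ℝ) - j) + -(δ / 2) * ((k : ℝ) - j) by ring,
              P2_add (-(d.θ₁ - d.θ₀ - δ) * ((k : ℝ) - j))]
            generalize P2 (-(d.θ₁ - d.θ₀ - δ) * ((k : ℝ) - j)) = p
            generalize P2 (-(δ / 2) * ((k : ℝ) - j)) = p'
            ring
        _ ≤ (3 * C * C1 + 2 * C2) * (d.R k * d.S δ κ k) * P2 (-δ' * -((j : ℝ) - k)) := by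
            refine mul_le_mul' (mul_le_mul' le_self_add
              (mul_le_mul' le_rfl (d.le_S δ κ hj))) (P2_mono ?_)
            have : δ' ≤ δ / 2 := min_le_left _ _
            nlinarith
    · have hj' : (k : ℝ) ≤ j := by exact_mod_cast hj
      rw [abs_of_nonneg (by linarith)]
      calc d.c j * KK A₀ A₁ g j ≤ (C2 * P2 (-(d.θ₀ / 2) * ((j : ℝ) - k)) * d.c k) * (2 * κ k) :=
            mul_le_mul' (hcr j k hj) (kg1 j)
        _ = 2 * C2 * (d.R k * (d.v k * κ k)) * P2 (-(d.θ₀ / 2) * ((j : ℝ) - k)) := by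
            rw [← d.Rv]
            generalize P2 (-(d.θ₀ / 2) * ((j : ℝ) - k)) = p
            ring
        _ ≤ _ := by
            refine mul_le_mul' (mul_le_mul' le_add_self
              (mul_le_mul' le_rfl (d.le_S' δ κ k))) (P2_mono ?_)
            have : δ' ≤ d.θ₀ / 2 := min_le_right _ _
            nlinarith
  · have hsplit : d.X1 (KK A₀ A₁ (f - g)) ≤ dN d.r₁ (fun j =>
        3 * C * (if k ≤ j then d.v j * κ j else 0) +
        2 * C3 * (d.v k * κ k) * P2 (-((1 - d.θ₁) / 2) * |(j : ℝ) - k|)) := by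
      refine dN_mono fun j => ?_
      rcases le_or_gt k j with hj | hj
      · refine le_trans ?_ le_self_add
        rw [if_pos hj]
        calc d.v j * KK A₀ A₁ (f - g) j ≤ d.v j * (3 * C * κ j) := mul_le_mul' le_rfl (kh2 j hj)
          _ = _ := by ring
      · refine le_trans ?_ le_add_self
        have hj' : (j : ℝ) < k := by exact_mod_cast hj
        rw [abs_of_neg (by linarith)]
        calc d.v j * KK A₀ A₁ (f - g) j ≤
              (C3 * P2 (-(-1 + (1 - d.θ₁) / 2) * ((k : ℝ) - j)) * d.v k) *
                (P2 ((j : ℝ) - k) * (2 * κ k)) := mul_le_mul' (hvl j k hj.le) (kh1 j)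
          _ = 2 * C3 * (d.v k * κ k) *
              (P2 (-(-1 + (1 - d.θ₁) / 2) * ((k : ℝ) - j)) * P2 ((j : ℝ) - k)) := by
              generalize P2 (-(-1 + (1 - d.θ₁) / 2) * ((k : ℝ) - j)) = p
              ring
          _ = _ := by
              rw [← P2_add]
              congr 2
              ring
    refine hsplit.trans ((hdadd _ _).trans ?_)
    rw [dN_const_mul d.hr₁]
    calc H * (3 * C * d.T κ k + dN d.r₁ (fun j => 2 * C3 * (d.v k * κ k) *
          P2 (-((1 - d.θ₁) / 2) * |(j : ℝ) - k|)))
        ≤ H * (3 * C * d.T κ k + G * (2 * C3 * (d.v k * κ k))) :=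
          mul_le_mul' le_rfl (add_le_add le_rfl (hgeo k _ _ fun j => le_rfl))
      _ ≤ H * (3 * C * d.T κ k + G * (2 * C3 * d.T κ k)) :=
          mul_le_mul' le_rfl (add_le_add le_rfl (mul_le_mul' le_rfl
            (mul_le_mul' le_rfl (d.le_T κ k))))
      _ = H * (3 * C + G * (2 * C3)) * d.T κ k := by ring
      _ ≤ _ := mul_le_mul' le_add_self le_rfl

lemma U_zero {δ : ℝ} (hδΔ : δ < d.θ₁ - d.θ₀) (k : ℤ) :
    ∃ C : ℝ≥0∞, C ≠ ∞ ∧ ∀ ε : ℝ≥0∞,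
      d.S δ (fun j => ε * P2 (min 0 ((j : ℝ) - k))) k ≤ C * ε ∧
      d.T (fun j => ε * P2 (min 0 ((j : ℝ) - k))) k ≤ C * ε := by
  have h0 := d.hθ₀
  have h1 := d.hθ₁
  have h2 := d.hθ
  obtain ⟨C3, hC3, hvl⟩ := d.hv.left (t := -1) (by linarith)
  obtain ⟨C4, hC4, hvr⟩ := d.hv.right (t := -(d.θ₁ / 2)) (by linarith)
  obtain ⟨G, hG, hgeo⟩ := dN_geo d.hr₁ (δ := d.θ₁ / 2) (by linarith)
  have hvk := d.vT k
  refine ⟨C3 * d.v k + G * (C4 * d.v k), by finiteness, fun ε => ⟨?_, ?_⟩⟩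
  · refine iSup_le fun j => ?_
    split_ifs with hj
    · have hj' : (j : ℝ) ≤ k := by exact_mod_cast hj
      beta_reduce
      rw [min_eq_right (by linarith)]
      calc P2 (-(d.θ₁ - d.θ₀ - δ) * ((k : ℝ) - j)) * (d.v j * (ε * P2 ((j : ℝ) - k)))
          ≤ 1 * ((C3 * P2 (-(-1) * ((k : ℝ) - j)) * d.v k) * (ε * P2 ((j : ℝ) - k))) := by
            refine mul_le_mul' ?_ (mul_le_mul' (hvl j k hj) le_rfl)
            rw [← P2_zero]
            apply P2_mono
            nlinarith
        _ = C3 * d.v k * ε * (P2 (-(-1) * ((k : ℝ) - j)) * P2 ((j : ℝ) - k)) := by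
            generalize P2 (-(-1) * ((k : ℝ) - j)) = p
            ring
        _ = C3 * d.v k * ε := by
            rw [← P2_add, show -(-1) * ((k : ℝ) - j) + (j - k) = 0 by ring, P2_zero, mul_one]
        _ ≤ _ := mul_le_mul' le_self_add le_rfl
    · exact zero_le
  · refine (hgeo k (C4 * d.v k * ε) _ fun j => ?_).trans ?_
    · split_ifs with hj
      · have hj' : (k : ℝ) ≤ j := by exact_mod_cast hj
        beta_reduce
        rw [min_eq_left (by linarith), P2_zero, mul_one, abs_of_nonneg (by linarith)]
        refine (mul_le_mul' (hvr j k hj) le_rfl).trans (le_of_eq ?_)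
        generalize P2 (-(d.θ₁ / 2) * ((j : ℝ) - k)) = p
        ring
      · exact zero_le
    · rw [← mul_assoc]
      exact mul_le_mul' le_add_self le_rfl

lemma U {δ : ℝ} (hδ : 0 < δ) (hδΔ : δ < d.θ₁ - d.θ₀) (P : ℝ≥0∞) (hP : P ≠ ∞) :
    ∃ C : ℝ≥0∞, C ≠ ∞ ∧ ∀ (f : E) (k : ℤ) (t : ℝ), ENNReal.ofReal t ≤ P * d.R k →
    Kf (fun g => d.X0 (KK A₀ A₁ g)) (fun g => d.X1 (KK A₀ A₁ g)) t f ≤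
      C * (d.R k * (d.S δ (KK A₀ A₁ f) k + d.T (KK A₀ A₁ f) k)) := by
  obtain ⟨C, hC, hU⟩ := d.U_core A₀ A₁ hδ
  refine ⟨C * (1 + P) + 1, by finiteness, fun f k t ht => ?_⟩
  have key : ∀ (g : E) (κ : ℤ → ℝ≥0∞),
      d.X0 (KK A₀ A₁ g) ≤ C * (d.R k * d.S δ κ k) → d.X1 (KK A₀ A₁ (f - g)) ≤ C * d.T κ k →
      Kf (fun g => d.X0 (KK A₀ A₁ g)) (fun g => d.X1 (KK A₀ A₁ g)) t f ≤
      C * (1 + P) * (d.R k * (d.S δ κ k + d.T κ k)) := by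
    intro g κ h0 h1
    refine (iInf_le _ g).trans ?_
    calc d.X0 (KK A₀ A₁ g) + ENNReal.ofReal t * d.X1 (KK A₀ A₁ (f - g))
        ≤ C * (d.R k * d.S δ κ k) + P * d.R k * (C * d.T κ k) :=
          add_le_add h0 (mul_le_mul' ht h1)
      _ ≤ (C * (d.R k * d.S δ κ k) + P * d.R k * (C * d.T κ k)) +
          (C * (d.R k * d.T κ k) + P * d.R k * (C * d.S δ κ k)) := le_self_add
      _ = _ := by ring
  by_cases hT : KK A₀ A₁ f k = ∞
  · have : d.S δ (KK A₀ A₁ f) k = ∞ := by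
      have h := d.le_S' δ (KK A₀ A₁ f) k
      rw [hT, ENNReal.mul_top (d.v0 k)] at h
      exact top_le_iff.1 h
    rw [this, top_add, ENNReal.mul_top (d.R0 k), ENNReal.mul_top (by simp)]
    exact le_top
  by_cases h0 : KK A₀ A₁ f k = 0
  · have hz : ∀ j, KK A₀ A₁ f j = 0 := by
      intro j
      have h := Kf_le_mul (N₀ := A₀.N) (N₁ := A₁.N) (s := dy k) (t := dy j)
        (M := max 1 (dy j / dy k)) (le_max_left _ _) (by
          rw [← div_le_iff₀ (dy_pos k)]; exact le_max_right _ _) f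
      unfold KK at h0 ⊢
      rw [h0, mul_zero] at h
      exact nonpos_iff_eq_zero.1 h
    obtain ⟨G, hG, hUz⟩ := d.U_zero hδΔ k
    have hsmall : ∀ ε : ℝ≥0∞, ε ≠ 0 →
        Kf (fun g => d.X0 (KK A₀ A₁ g)) (fun g => d.X1 (KK A₀ A₁ g)) t f ≤
        C * (1 + P) * (d.R k * (G + G)) * ε := by
      intro ε hε
      have hkk : ε * P2 (min 0 ((k : ℝ) - k)) = ε := by
        simp [P2_zero]
      obtain ⟨g, hg⟩ : ∃ g : E, A₀.N g + ENNReal.ofReal (dy k) * A₁.N (f - g) < 2 * ε := by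
        have : KK A₀ A₁ f k < 2 * ε := by
          rw [h0]
          exact pos_iff_ne_zero.2 (mul_ne_zero (by norm_num) hε)
        exact iInf_lt_iff.1 this
      rw [ofReal_dy] at hg
      obtain ⟨h1, h2⟩ := hU f g k (fun j : ℤ => ε * P2 (min 0 ((j : ℝ) - k)))
        (fun j => by rw [hz j]; exact zero_le)
        (fun j hj => by
          have hj' : (j : ℝ) ≤ k := by exact_mod_cast hj
          rw [hkk, min_eq_right (by linarith), mul_left_comm, ← P2_add,
            show (k : ℝ) - j + (j - k) = 0 by ring, P2_zero, mul_one])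
        (fun j hj => by
          have hj' : (k : ℝ) ≤ j := by exact_mod_cast hj
          rw [hkk, min_eq_left (by linarith), P2_zero, mul_one])
        (by rw [hkk]; exact hg.le)
      refine (key g _ h1 h2).trans ?_
      rw [mul_assoc (C * (1 + P)), mul_assoc (d.R k), add_mul]
      exact mul_le_mul' le_rfl (mul_le_mul' le_rfl (add_le_add (hUz ε).1 (hUz ε).2))
    have hfinal : Kf (fun g => d.X0 (KK A₀ A₁ g)) (fun g => d.X1 (KK A₀ A₁ g)) t f ≤ 0 := by
      have hRk := d.RT k
      set Q := C * (1 + P) * (d.R k * (G + G)) with hQ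
      have hQT : Q ≠ ∞ := by rw [hQ]; finiteness
      refine ENNReal.le_of_forall_pos_le_add fun ε hε _ => ?_
      rw [zero_add]
      refine (hsmall (ε / (Q + 1)) ?_).trans ?_
      · exact (ENNReal.div_pos (by simpa using hε.ne') (by finiteness)).ne'
      · calc Q * (ε / (Q + 1)) ≤ (Q + 1) * (ε / (Q + 1)) := mul_le_mul' le_self_add le_rfl
          _ = ε := ENNReal.mul_div_cancel (by simp) (by finiteness)
    exact hfinal.trans zero_le
  · obtain ⟨g, hg⟩ : ∃ g : E, A₀.N g + ENNReal.ofReal (dy k) * A₁.N (f - g) <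
        2 * KK A₀ A₁ f k := by
      have : KK A₀ A₁ f k < 2 * KK A₀ A₁ f k := by
        rw [two_mul]
        exact ENNReal.lt_add_right hT h0
      exact iInf_lt_iff.1 this
    rw [ofReal_dy] at hg
    obtain ⟨h1, h2⟩ := hU f g k (KK A₀ A₁ f) (fun j => le_rfl)
      (fun j hj => by
        have hj' : (j : ℝ) ≤ k := by exact_mod_cast hj
        rw [P2_eq]
        refine Kf_le_mul (Real.one_le_rpow (by norm_num) (by linarith)) (le_of_eq ?_) f
        unfold dy
        rw [← Real.rpow_add (by norm_num)]
        congr 1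
        ring)
      (fun j hj => Kf_mono_t (dy_mono hj) f) hg.le
    exact (key g _ h1 h2).trans (mul_le_mul' le_self_add le_rfl)

end DD

namespace DD

variable (d : DD) (A₀ A₁ : QuasiBanach E)

lemma main_disc {θ : ℝ} (hθ : 0 < θ) (hθ1 : θ ≤ 1) {W : ℤ → ℝ≥0∞}
    (hW : Idx W (-((d.θ₁ - d.θ₀) * θ))) {ρ : ℤ → ℝ} {P : ℝ≥0∞} (hP : P ≠ ∞)
    (h1 : ∀ k, ENNReal.ofReal (ρ k) ≤ P * d.R k) (h2 : ∀ k, d.R k ≤ P * ENNReal.ofReal (ρ k))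
    {r : ℝ≥0∞} (hr : 0 < r) :
    LeC (fun f : E => dN r (fun k => W k *
        Kf (fun g => d.X0 (KK A₀ A₁ g)) (fun g => d.X1 (KK A₀ A₁ g)) (ρ k) f))
      (fun f => dN r (fun k => W k * d.R k * d.T (KK A₀ A₁ f) k)) ∧
    LeC (fun f : E => dN r (fun k => W k * d.R k * d.T (KK A₀ A₁ f) k))
      (fun f => dN r (fun k => W k *
        Kf (fun g => d.X0 (KK A₀ A₁ g)) (fun g => d.X1 (KK A₀ A₁ g)) (ρ k) f)) := by
  have hΔ : 0 < d.θ₁ - d.θ₀ := by linarith [d.hθ]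
  have hΔθ : 0 < (d.θ₁ - d.θ₀) * θ := mul_pos hΔ hθ
  constructor
  · set δ := (d.θ₁ - d.θ₀) * θ / 4 with hδ
    have hδ0 : 0 < δ := by positivity
    obtain ⟨C, hC, hU⟩ := d.U A₀ A₁ hδ0 (by rw [hδ]; nlinarith) P hP
    obtain ⟨D, hD, hadd⟩ := dN_add hr
    obtain ⟨F, hF, hw⟩ := (hW.mul d.hR).right
      (t := -((d.θ₁ - d.θ₀) * θ) + (d.θ₁ - d.θ₀) + δ) (by linarith)
    obtain ⟨G, hG, hsch⟩ := dN_schur hr (ε := 2 * δ) (by positivity)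
    refine ⟨C * (D * (F * G + 1)), by finiteness, fun f => ?_⟩
    set κ := KK A₀ A₁ f with hκ
    have hS : dN r (fun k => W k * d.R k * d.S δ κ k) ≤
        F * G * dN r (fun k => W k * d.R k * d.T κ k) := by
      have := hsch id (fun k => W k * d.R k * d.S δ κ k)
        (fun j => F * (W j * d.R j * d.T κ j)) fun k => ?_
      · rw [dN_const_mul hr] at this
        exact this.trans (le_of_eq (by ring))
      · beta_reduce
        unfold S
        rw [ENNReal.mul_iSup]
        refine iSup_mono fun j => ?_
        split_ifs with hj
        · have hj' : (j : ℝ) ≤ k := by exact_mod_cast hj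
          rw [id, abs_of_nonneg (by linarith)]
          calc W k * d.R k * (P2 (-(d.θ₁ - d.θ₀ - δ) * ((k : ℝ) - j)) * (d.v j * κ j))
              ≤ (F * P2 ((-((d.θ₁ - d.θ₀) * θ) + (d.θ₁ - d.θ₀) + δ) * ((k : ℝ) - j)) *
                (W j * d.R j)) * (P2 (-(d.θ₁ - d.θ₀ - δ) * ((k : ℝ) - j)) * d.T κ j) :=
                mul_le_mul' (hw k j hj) (mul_le_mul' le_rfl (d.le_T κ j))
            _ = (P2 ((-((d.θ₁ - d.θ₀) * θ) + (d.θ₁ - d.θ₀) + δ) * ((k : ℝ) - j)) *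
                P2 (-(d.θ₁ - d.θ₀ - δ) * ((k : ℝ) - j))) * (F * (W j * d.R j * d.T κ j)) := by
                generalize P2 ((-((d.θ₁ - d.θ₀) * θ) + (d.θ₁ - d.θ₀) + δ) * ((k : ℝ) - j)) = p
                generalize P2 (-(d.θ₁ - d.θ₀ - δ) * ((k : ℝ) - j)) = p'
                ring
            _ = _ := by
                rw [← P2_add]
                congr 2
                rw [hδ]
                ring
        · rw [mul_zero]; exact zero_le
    calc dN r (fun k => W k * Kf (fun g => d.X0 (KK A₀ A₁ g)) (fun g => d.X1 (KK A₀ A₁ g)) (ρ k) f)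
        ≤ dN r (fun k => C * (W k * d.R k * d.S δ κ k + W k * d.R k * d.T κ k)) := by
          refine dN_mono fun k => ?_
          refine (mul_le_mul' le_rfl (hU f k (ρ k) (h1 k))).trans (le_of_eq ?_)
          ring
      _ = C * dN r (fun k => (W k * d.R k * d.S δ κ k + W k * d.R k * d.T κ k)) :=
          dN_const_mul hr _ _
      _ ≤ C * (D * (F * G * dN r (fun k => W k * d.R k * d.T κ k) +
            dN r (fun k => W k * d.R k * d.T κ k))) :=
          mul_le_mul' le_rfl ((hadd _ _).trans (mul_le_mul' le_rfl (add_le_add hS le_rfl)))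
      _ = _ := by ring
  · obtain ⟨C, hC, hL⟩ := d.L3 A₀ A₁ P hP
    refine ⟨C, hC, fun f => ?_⟩
    rw [← dN_const_mul hr]
    refine dN_mono fun k => ?_
    rw [mul_assoc]
    refine (mul_le_mul' le_rfl (hL f k (ρ k) (h2 k))).trans (le_of_eq ?_)
    ring

lemma tail_hardy {w : ℤ → ℝ≥0∞} {s : ℝ} (hs : 0 < s) (hw : Idx w s) {r : ℝ≥0∞} (hr : 0 < r) :
    LeC (fun κ : ℤ → ℝ≥0∞ => dN r (fun k => w k * d.T κ k))
      (fun κ => dN r (fun k => w k * (d.v k * κ k))) := by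
  obtain ⟨F, hF, hw⟩ := hw.left (t := s / 2) (by linarith)
  obtain ⟨D, hD, hgeo⟩ := dN_geo d.hr₁ (δ := s / 4) (by linarith)
  obtain ⟨G, hG, hsch⟩ := dN_schur hr (ε := s / 4) (by positivity)
  refine ⟨G * (D * F), by finiteness, fun κ => ?_⟩
  have := hsch id (fun k => w k * d.T κ k) (fun j => D * F * (w j * (d.v j * κ j))) fun k => ?_
  · rw [dN_const_mul hr] at this
    exact this.trans (le_of_eq (by ring))
  · have hT : d.T κ k ≤ D * ⨆ j : ℤ, if k ≤ j then P2 (s / 4 * ((j : ℝ) - k)) * (d.v j * κ j)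
        else 0 := by
      refine hgeo k _ _ fun j => ?_
      split_ifs with hj
      · have hj' : (k : ℝ) ≤ j := by exact_mod_cast hj
        rw [abs_of_nonneg (by linarith)]
        have h1 := le_iSup (fun j : ℤ => if k ≤ j then P2 (s / 4 * ((j : ℝ) - k)) * (d.v j * κ j)
          else 0) j
        simp only [hj, if_true] at h1
        calc d.v j * κ j = (P2 (s / 4 * ((j : ℝ) - k)) * P2 (-(s / 4) * ((j : ℝ) - k))) *
              (d.v j * κ j) := by
              rw [← P2_add, show s / 4 * ((j : ℝ) - k) + -(s / 4) * ((j : ℝ) - k) = 0 by ring,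
                P2_zero, one_mul]
          _ = (P2 (s / 4 * ((j : ℝ) - k)) * (d.v j * κ j)) * P2 (-(s / 4) * ((j : ℝ) - k)) := by
              generalize P2 (s / 4 * ((j : ℝ) - k)) = p
              generalize P2 (-(s / 4) * ((j : ℝ) - k)) = p'
              ring
          _ ≤ _ := mul_le_mul' h1 le_rfl
      · exact zero_le
    refine (mul_le_mul' le_rfl hT).trans ?_
    rw [ENNReal.mul_iSup, ENNReal.mul_iSup]
    refine iSup_mono fun j => ?_
    split_ifs with hj
    · have hj' : (k : ℝ) ≤ j := by exact_mod_cast hj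
      rw [id, abs_of_nonpos (by linarith)]
      calc w k * (D * (P2 (s / 4 * ((j : ℝ) - k)) * (d.v j * κ j)))
          ≤ (F * P2 (-(s / 2) * ((j : ℝ) - k)) * w j) *
            (D * (P2 (s / 4 * ((j : ℝ) - k)) * (d.v j * κ j))) :=
            mul_le_mul' (hw k j hj) le_rfl
        _ = (P2 (-(s / 2) * ((j : ℝ) - k)) * P2 (s / 4 * ((j : ℝ) - k))) *
            (D * F * (w j * (d.v j * κ j))) := by
            generalize P2 (s / 4 * ((j : ℝ) - k)) = p
            generalize P2 (-(s / 2) * ((j : ℝ) - k)) = p'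
            ring
        _ = _ := by
            rw [← P2_add]
            congr 2
            ring
    · rw [mul_zero, mul_zero]; exact zero_le

lemma le_tail_hardy (w : ℤ → ℝ≥0∞) (r : ℝ≥0∞) :
    LeC (fun κ : ℤ → ℝ≥0∞ => dN r (fun k => w k * (d.v k * κ k)))
      (fun κ => dN r (fun k => w k * d.T κ k)) :=
  LeC.of_le fun κ => dN_mono fun k => mul_le_mul' le_rfl (d.le_T κ k)

end DD

section
variable {ι : Type*}

lemma disc2 {w : ℝ → ℝ≥0∞} (hw : RegF (fun _ : ι => w)) {G : ι → ℝ → ℝ≥0∞} {x : ι → ℤ → ℝ≥0∞}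
    (h : ∃ C : ℝ≥0∞, C ≠ ∞ ∧ ∀ i k, ∀ t ∈ Icc (dy k) (dy (k + 1)),
      G i t ≤ C * x i k ∧ x i k ≤ C * G i t) {q : ℝ≥0∞} (hq : 0 < q) :
    LeC (fun i => WN q (Ioi 0) (fun t => w t * G i t)) (fun i => dN q (fun k => w (dy k) * x i k)) ∧
    LeC (fun i => dN q (fun k => w (dy k) * x i k)) (fun i => WN q (Ioi 0) (fun t => w t * G i t)) := by
  obtain ⟨h1, h2⟩ := (hw.mul (RegF.of_Icc h)).disc hq
  obtain ⟨C, hC, h⟩ := h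
  refine ⟨h1.trans ⟨C, hC, fun i => ?_⟩, LeC.trans ⟨C, hC, fun i => ?_⟩ h2⟩
  · rw [← dN_const_mul hq]
    refine dN_mono fun k => ?_
    refine (mul_le_mul' le_rfl (h i k _ (dy_mem_Icc k)).1).trans (le_of_eq (by ring))
  · rw [← dN_const_mul hq]
    refine dN_mono fun k => ?_
    refine (mul_le_mul' le_rfl (h i k _ (dy_mem_Icc k)).2).trans (le_of_eq (by ring))

lemma dN_LeC {q : ℝ≥0∞} (hq : 0 < q) {x y : ι → ℤ → ℝ≥0∞} {C : ℝ≥0∞} (hC : C ≠ ∞)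
    (h : ∀ i k, x i k ≤ C * y i k) : LeC (fun i => dN q (x i)) (fun i => dN q (y i)) :=
  ⟨C, hC, fun i => by rw [← dN_const_mul hq]; exact dN_mono (h i)⟩

lemma ofReal_div' {x y : ℝ} (hy : 0 < y) :
    ENNReal.ofReal (x / y) = ENNReal.ofReal x * (ENNReal.ofReal y)⁻¹ := by
  rw [ENNReal.ofReal_div_of_pos hy, div_eq_mul_inv]

lemma RegF_wgt {b : ℝ → ℝ} (hb : SlowlyVarying b) (p : ℝ) :
    MReg (fun (_ : ι) u => ENNReal.ofReal (u ^ p * b u)) :=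
  ((MReg_pow p).mul (MReg_SV hb)).congr fun _ u hu => by
    rw [ENNReal.ofReal_mul (by positivity)]

lemma RegF_quot {b a : ℝ → ℝ} (hb : SlowlyVarying b) (ha : SlowlyVarying a) :
    RegF (fun (_ : ι) u => ENNReal.ofReal (b u / a u)) :=
  ((MReg_SV hb).regF.mul (MReg_SV ha).regF.inv).congr fun _ u hu => by
    rw [ofReal_div' (SV_pos ha hu)]

lemma Idx_wgt {b : ℝ → ℝ} (hb : SlowlyVarying b) (p : ℝ) :
    Idx (fun k => ENNReal.ofReal (dy k ^ p * b (dy k))) p := by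
  have := (Idx_dy p).mul (Idx_SV hb)
  rw [add_zero] at this
  refine this.congr (LeC.of_le fun k => ?_) (LeC.of_le fun k => ?_) <;>
  rw [ENNReal.ofReal_mul (Real.rpow_nonneg (dy_pos k).le _)]

lemma Idx_quot {b a : ℝ → ℝ} (hb : SlowlyVarying b) (ha : SlowlyVarying a) :
    Idx (fun k => ENNReal.ofReal (b (dy k) / a (dy k))) 0 := by
  have := (Idx_SV hb).mul (Idx_SV ha).inv
  rw [neg_zero, add_zero] at this
  refine this.congr (LeC.of_le fun k => ?_) (LeC.of_le fun k => ?_) <;>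
  rw [ofReal_div' (SV_pos ha (dy_pos k))]

end

lemma tail_WN {r₀ : ℝ≥0∞} {b : ℝ → ℝ} {t : ℝ} (ht : 0 < t) :
    LqNorm r₀ (Ioi t) (svWgt r₀ b) = WN r₀ (Ioi t) (fun s => ENNReal.ofReal (b s)) := by
  refine LqNorm_congr measurableSet_Ioi fun u hu => ?_
  have hu0 : 0 < u := ht.trans hu
  unfold svWgt
  rw [ENNReal.ofReal_mul (by positivity)]

theorem setup_data (A₀ A₁ : QuasiBanach E)
    (θ₀ θ₁ : ℝ) (hθ₀ : 0 < θ₀) (hθ₀₁ : θ₀ < θ₁) (hθ₁ : θ₁ < 1)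
    (q₀ r₀ r₁ : ℝ≥0∞) (hq₀ : 0 < q₀) (hr₀ : 0 < r₀) (hr₁ : 0 < r₁)
    (a₀ b₀ b₁ : ℝ → ℝ)
    (h_sv_a₀ : SlowlyVarying a₀)
    (h_sv_b₀ : SlowlyVarying b₀)
    (h_sv_b₁ : SlowlyVarying b₁)
    (hfin : LqNorm r₀ (Ioi 1) (svWgt r₀ (fun s => b₀ s / a₀ s)) ≠ ∞)
    (c₀ ρ : ℝ → ℝ)
    (hc₀ : ∀ t, c₀ t = a₀ t * (LqNorm r₀ (Ioi t) (svWgt r₀ (fun s => b₀ s / a₀ s))).toReal)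
    (hρ : ∀ t, ρ t = t ^ (θ₁ - θ₀) * (c₀ t / b₁ t)) :
    ∃ d : DD, d.θ₀ = θ₀ ∧ d.θ₁ = θ₁ ∧
      (∀ κ k, d.T κ k = dN r₁ (fun j => if k ≤ j then
        ENNReal.ofReal (dy j ^ (-θ₁) * b₁ (dy j)) * κ j else 0)) ∧
      (∀ k, d.v k = ENNReal.ofReal (dy k ^ (-θ₁) * b₁ (dy k))) ∧
      LeC (normL A₀.N A₁.N θ₀ r₀ q₀ b₀ a₀) (fun f => d.X0 (KK A₀ A₁ f)) ∧
      LeC (fun f => d.X0 (KK A₀ A₁ f)) (normL A₀.N A₁.N θ₀ r₀ q₀ b₀ a₀) ∧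
      LeC (normK A₀.N A₁.N θ₁ r₁ b₁) (fun f => d.X1 (KK A₀ A₁ f)) ∧
      LeC (fun f => d.X1 (KK A₀ A₁ f)) (normK A₀.N A₁.N θ₁ r₁ b₁) ∧
      (∀ t, 0 < t → 0 < c₀ t) ∧ (∀ t, 0 < t → 0 < ρ t) ∧
      RegF (fun (_ : Unit) u => ENNReal.ofReal (c₀ u)) ∧
      RegF (fun (_ : Unit) u => ENNReal.ofReal (ρ u)) ∧
      ∃ P : ℝ≥0∞, P ≠ ∞ ∧ (∀ k, ENNReal.ofReal (ρ (dy k)) ≤ P * d.R k) ∧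
        (∀ k, d.R k ≤ P * ENNReal.ofReal (ρ (dy k))) := by
  have hβR : RegF (fun (_ : Unit) u => ENNReal.ofReal (b₀ u / a₀ u)) := RegF_quot h_sv_b₀ h_sv_a₀
  have hβI := Idx_quot h_sv_b₀ h_sv_a₀
  have hβ0 : ∀ k : ℤ, ENNReal.ofReal (b₀ (dy k) / a₀ (dy k)) ≠ 0 := fun k =>
    (ENNReal.ofReal_pos.2 (div_pos (SV_pos h_sv_b₀ (dy_pos k)) (SV_pos h_sv_a₀ (dy_pos k)))).ne'
  obtain ⟨C, hC, htail⟩ := hβR.tail hr₀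
  set Bd : ℤ → ℝ≥0∞ := fun k => dN r₀ (fun j => if k ≤ j then
    ENNReal.ofReal (b₀ (dy j) / a₀ (dy j)) else 0) with hBd
  have hBd0 : ∀ k, Bd k ≠ 0 := by
    intro k hk
    have := le_dN hr₀ (fun j => if k ≤ j then
      ENNReal.ofReal (b₀ (dy j) / a₀ (dy j)) else 0) k
    simp only [le_refl, if_true] at this
    exact hβ0 k (nonpos_iff_eq_zero.1 (this.trans hk.le))
  have hBdT : ∀ k, Bd k ≠ ∞ := by
    have h0 : Bd 0 ≠ ∞ := by
      have h := (htail () 0 (dy 0) (dy_mem_Icc 0)).2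
      rw [dy_zero, ← tail_WN one_pos] at h
      exact ne_top_of_le_ne_top (ENNReal.mul_ne_top hC hfin) h
    intro k
    obtain ⟨D, hD, h⟩ := (hβI.tail hr₀) 1 one_pos
    exact ne_top_of_le_ne_top (ENNReal.mul_ne_top (ENNReal.mul_ne_top hD (P2_ne_top _)) h0) (h k 0)
  let B : ℝ → ℝ≥0∞ := fun t => LqNorm r₀ (Ioi t) (svWgt r₀ (fun s => b₀ s / a₀ s))
  have hB : ∀ (k : ℤ), ∀ t ∈ Icc (dy k) (dy (k + 1)), B t ≤ C * Bd k ∧ Bd k ≤ C * B t := by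
    intro k t ht
    have := htail () k t ht
    rw [← tail_WN ((dy_pos k).trans_le ht.1)] at this
    exact this
  have hBreg : RegF (fun (_ : Unit) t => B t) :=
    RegF.of_Icc (x := fun _ => Bd) ⟨C, hC, fun _ k t ht => hB k t ht⟩
  have hB0T : ∀ t, 0 < t → B t ≠ 0 ∧ B t ≠ ∞ := by
    intro t ht
    obtain ⟨k, hk⟩ := exists_pc ht
    have h := hB k t ⟨hk.1.le, hk.2⟩
    refine ⟨fun h0 => ?_, ne_top_of_le_ne_top (ENNReal.mul_ne_top hC (hBdT k)) h.1⟩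
    rw [h0, mul_zero] at h
    exact hBd0 k (nonpos_iff_eq_zero.1 h.2)
  have hcpos : ∀ t, 0 < t → 0 < c₀ t := by
    intro t ht
    rw [hc₀]
    exact mul_pos (SV_pos h_sv_a₀ ht) (ENNReal.toReal_pos (hB0T t ht).1 (hB0T t ht).2)
  have hρpos : ∀ t, 0 < t → 0 < ρ t := by
    intro t ht
    rw [hρ]
    exact mul_pos (Real.rpow_pos_of_pos ht _) (div_pos (hcpos t ht) (SV_pos h_sv_b₁ ht))
  have hcB : ∀ t, 0 < t → ENNReal.ofReal (a₀ t) * B t = ENNReal.ofReal (c₀ t) := by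
    intro t ht
    rw [hc₀, ENNReal.ofReal_mul (SV_pos h_sv_a₀ ht).le, ENNReal.ofReal_toReal (hB0T t ht).2]
  have hcreg : RegF (fun (_ : Unit) u => ENNReal.ofReal (c₀ u)) :=
    ((MReg_SV h_sv_a₀).regF.mul hBreg).congr fun _ u hu => hcB u hu
  have hρreg : RegF (fun (_ : Unit) u => ENNReal.ofReal (ρ u)) :=
    ((MReg_pow (θ₁ - θ₀)).regF.mul (hcreg.mul (MReg_SV h_sv_b₁).regF.inv)).congr fun _ u hu => by
      rw [hρ, ENNReal.ofReal_mul (by positivity), ofReal_div' (SV_pos h_sv_b₁ hu)]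
  let d : DD :=
    { u := fun k => ENNReal.ofReal (dy k ^ (-θ₀) * a₀ (dy k))
      β := fun k => ENNReal.ofReal (b₀ (dy k) / a₀ (dy k))
      v := fun k => ENNReal.ofReal (dy k ^ (-θ₁) * b₁ (dy k))
      θ₀ := θ₀
      θ₁ := θ₁
      q₀ := q₀
      r₀ := r₀
      r₁ := r₁
      hθ₀ := hθ₀
      hθ := hθ₀₁
      hθ₁ := hθ₁
      hq₀ := hq₀
      hr₀ := hr₀
      hr₁ := hr₁
      hu := Idx_wgt h_sv_a₀ _
      hβ := hβI
      hv := Idx_wgt h_sv_b₁ _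
      u0 := fun k => (ENNReal.ofReal_pos.2 (mul_pos (Real.rpow_pos_of_pos (dy_pos k) _)
        (SV_pos h_sv_a₀ (dy_pos k)))).ne'
      uT := fun k => ENNReal.ofReal_ne_top
      v0 := fun k => (ENNReal.ofReal_pos.2 (mul_pos (Real.rpow_pos_of_pos (dy_pos k) _)
        (SV_pos h_sv_b₁ (dy_pos k)))).ne'
      vT := fun k => ENNReal.ofReal_ne_top
      B0 := hBd0
      BT := hBdT }
  have hL := disc2 (ι := E) (RegF_quot h_sv_b₀ h_sv_a₀)
    (((RegF_wgt (ι := E) h_sv_a₀ (-θ₀)).mul (MReg_Kf A₀.N A₁.N)).regF.head hq₀) hr₀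
  have hK := ((RegF_wgt (ι := E) h_sv_b₁ (-θ₁)).mul (MReg_Kf A₀.N A₁.N)).regF.disc hr₁
  have eL : normL A₀.N A₁.N θ₀ r₀ q₀ b₀ a₀ = _ := funext fun f => normL_eq A₀.N A₁.N θ₀ r₀ q₀ b₀ a₀ f
  have eK : normK A₀.N A₁.N θ₁ r₁ b₁ = _ := funext fun f => normK_eq A₀.N A₁.N θ₁ r₁ b₁ f
  have hRk : ∀ k, ENNReal.ofReal (ρ (dy k)) = d.u k * (d.v k)⁻¹ * B (dy k) := by
    intro k
    have hk := dy_pos k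
    have e : dy k ^ (θ₁ - θ₀) * (c₀ (dy k) / b₁ (dy k)) =
        (dy k ^ (-θ₀) * a₀ (dy k)) / (dy k ^ (-θ₁) * b₁ (dy k)) * (B (dy k)).toReal := by
      rw [hc₀, show θ₁ - θ₀ = -θ₀ - (-θ₁) by ring, Real.rpow_sub hk]
      show _ * (a₀ (dy k) * (B (dy k)).toReal / b₁ (dy k)) = _
      ring
    have hb := SV_pos h_sv_b₁ hk
    have ha := SV_pos h_sv_a₀ hk
    rw [hρ, e, ENNReal.ofReal_mul (by positivity), ENNReal.ofReal_toReal (hB0T _ hk).2,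
      ofReal_div' (by positivity)]
  have hRk' : ∀ k, d.R k = d.u k * (d.v k)⁻¹ * Bd k := by
    intro k
    show d.u k * Bd k * (d.v k)⁻¹ = _
    ring
  refine ⟨d, rfl, rfl, fun _ _ => rfl, fun _ => rfl, ?_, ?_, ?_, ?_, hcpos, hρpos, hcreg, hρreg,
    C, hC, fun k => ?_, fun k => ?_⟩
  · rw [eL]; exact hL.1
  · rw [eL]; exact hL.2
  · rw [eK]; exact hK.1
  · rw [eK]; exact hK.2
  · rw [hRk, hRk']
    refine (mul_le_mul' le_rfl (hB k _ (dy_mem_Icc k)).1).trans (le_of_eq (by ring))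
  · rw [hRk, hRk']
    refine (mul_le_mul' le_rfl (hB k _ (dy_mem_Icc k)).2).trans (le_of_eq (by ring))

theorem main_equiv (A₀ A₁ : QuasiBanach E) (N₀ N₁ : E → ℝ≥0∞) (d : DD)
    {a : ℝ → ℝ} (ha : SlowlyVarying a)
    (h0 : LeC N₀ (fun f => d.X0 (KK A₀ A₁ f))) (h0' : LeC (fun f => d.X0 (KK A₀ A₁ f)) N₀)
    (h1 : LeC N₁ (fun f => d.X1 (KK A₀ A₁ f))) (h1' : LeC (fun f => d.X1 (KK A₀ A₁ f)) N₁)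
    {ρ : ℤ → ℝ} (hρ : ∀ k, 0 < ρ k) {P : ℝ≥0∞} (hP : P ≠ ∞)
    (hρ1 : ∀ k, ENNReal.ofReal (ρ k) ≤ P * d.R k) (hρ2 : ∀ k, d.R k ≤ P * ENNReal.ofReal (ρ k))
    {θ : ℝ} (hθ : 0 < θ) (hθ1 : θ ≤ 1) {r : ℝ≥0∞} (hr : 0 < r) :
    Idx (fun k => ENNReal.ofReal (ρ k ^ (1 - θ) * a (ρ k))) ((d.θ₁ - d.θ₀) * (1 - θ)) ∧
    LeC (normK N₀ N₁ θ r a)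
      (fun f => dN r (fun k => ENNReal.ofReal (ρ k ^ (1 - θ) * a (ρ k)) * d.T (KK A₀ A₁ f) k)) ∧
    LeC (fun f => dN r (fun k => ENNReal.ofReal (ρ k ^ (1 - θ) * a (ρ k)) * d.T (KK A₀ A₁ f) k))
      (normK N₀ N₁ θ r a) := by
  have hI : Idx (fun k => ENNReal.ofReal (ρ k)) (d.θ₁ - d.θ₀) :=
    d.hR.congr ⟨P, hP, hρ2⟩ ⟨P, hP, hρ1⟩
  have hIa := Idx_comp ha hρ hI
  have hW : Idx (fun k => ENNReal.ofReal (ρ k ^ (-θ) * a (ρ k))) (-((d.θ₁ - d.θ₀) * θ)) := by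
    have := (hI.rpow hθ.le).inv.mul hIa
    rw [add_zero] at this
    refine this.congr (LeC.of_le fun k => le_of_eq ?_) (LeC.of_le fun k => le_of_eq ?_)
    all_goals
      rw [ENNReal.ofReal_mul (Real.rpow_nonneg (hρ k).le _), ENNReal.ofReal_rpow_of_pos (hρ k),
        ← ENNReal.ofReal_inv_of_pos (Real.rpow_pos_of_pos (hρ k) _), Real.rpow_neg (hρ k).le]
  have hw : Idx (fun k => ENNReal.ofReal (ρ k ^ (1 - θ) * a (ρ k))) ((d.θ₁ - d.θ₀) * (1 - θ)) := by
    have := (hI.rpow (p := 1 - θ) (by linarith)).mul hIa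
    rw [add_zero] at this
    refine this.congr (LeC.of_le fun k => le_of_eq ?_) (LeC.of_le fun k => le_of_eq ?_)
    all_goals
      rw [ENNReal.ofReal_mul (Real.rpow_nonneg (hρ k).le _), ENNReal.ofReal_rpow_of_pos (hρ k)]
  have hWw : ∀ k, ENNReal.ofReal (ρ k ^ (-θ) * a (ρ k)) * ENNReal.ofReal (ρ k) =
      ENNReal.ofReal (ρ k ^ (1 - θ) * a (ρ k)) := by
    intro k
    have := SV_pos ha (hρ k)
    have h' := hρ k
    rw [← ENNReal.ofReal_mul (by positivity), sub_eq_add_neg 1 θ, Real.rpow_add h', Real.rpow_one]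
    congr 1
    ring
  have hM : MReg (fun (f : E) u => ENNReal.ofReal (u ^ (-θ) * a u) * Kf N₀ N₁ u f) :=
    (RegF_wgt ha (-θ)).mul (MReg_Kf N₀ N₁)
  obtain ⟨d1, d2⟩ := hM.regF.disc hr
  obtain ⟨v1, v2⟩ := change_var hM hρ (by linarith [d.hθ]) hI hr
  obtain ⟨m1, m2⟩ := d.main_disc A₀ A₁ hθ hθ1 hW hP hρ1 hρ2 hr
  obtain ⟨C, hC, k1⟩ := Kf_LeC h0 h1
  obtain ⟨D, hD, k2⟩ := Kf_LeC h0' h1'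
  have eK : normK N₀ N₁ θ r a = _ := funext fun f => normK_eq N₀ N₁ θ r a f
  refine ⟨hw, ?_, ?_⟩
  · rw [eK]
    refine d1.trans (v1.trans (LeC.trans ?_ (m1.trans ?_)))
    · refine dN_LeC hr hC fun f k => ?_
      refine (mul_le_mul' le_rfl (k1 (ρ k) f)).trans (le_of_eq (by ring))
    · refine dN_LeC hr hP fun f k => ?_
      rw [← hWw]
      calc _ ≤ _ := mul_le_mul' (mul_le_mul' le_rfl (hρ2 k)) le_rfl
        _ = _ := by ring
  · rw [eK]
    refine LeC.trans ?_ (v2.trans d2)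
    refine LeC.trans ?_ (m2.trans ?_)
    · refine dN_LeC hr hP fun f k => ?_
      rw [← hWw]
      calc _ ≤ _ := mul_le_mul' (mul_le_mul' le_rfl (hρ1 k)) le_rfl
        _ = _ := by ring
    · refine dN_LeC hr hD fun f k => ?_
      refine (mul_le_mul' le_rfl (k2 (ρ k) f)).trans (le_of_eq (by ring))

theorem theorem11
    (A₀ A₁ : QuasiBanach E)
    (hne : ∃ x : E, x ≠ 0 ∧ A₀.N x ≠ ∞ ∧ A₁.N x ≠ ∞)
    (θ₀ θ₁ : ℝ) (hθ₀ : 0 < θ₀) (hθ₀₁ : θ₀ < θ₁) (hθ₁ : θ₁ < 1)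
    (q₀ r₀ r₁ r : ℝ≥0∞) (hq₀ : 0 < q₀) (hr₀ : 0 < r₀) (hr₁ : 0 < r₁) (hr : 0 < r)
    (a a₀ b₀ b₁ : ℝ → ℝ)
    (h_sv_a : SlowlyVarying a)
    (h_sv_a₀ : SlowlyVarying a₀)
    (h_sv_b₀ : SlowlyVarying b₀)
    (h_sv_b₁ : SlowlyVarying b₁)
    (hfin : LqNorm r₀ (Ioi 1) (svWgt r₀ (fun s => b₀ s / a₀ s)) ≠ ∞)
    (c₀ ρ : ℝ → ℝ)
    (hc₀ : ∀ t, c₀ t = a₀ t * (LqNorm r₀ (Ioi t) (svWgt r₀ (fun s => b₀ s / a₀ s))).toReal)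
    (hρ : ∀ t, ρ t = t ^ (θ₁ - θ₀) * (c₀ t / b₁ t)) :
    (∀ θ : ℝ, 0 < θ → θ < 1 →
      EquivNorms
        (normK (normL A₀.N A₁.N θ₀ r₀ q₀ b₀ a₀) (normK A₀.N A₁.N θ₁ r₁ b₁) θ r a)
        (normK A₀.N A₁.N ((1 - θ) * θ₀ + θ * θ₁) r
          (fun t => c₀ t ^ (1 - θ) * b₁ t ^ θ * a (ρ t)))) ∧
    (LqNorm r (Ioo 0 1) (svWgt r (fun s => a s)) ≠ ∞ →
      EquivNorms
        (normK (normL A₀.N A₁.N θ₀ r₀ q₀ b₀ a₀) (normK A₀.N A₁.N θ₁ r₁ b₁) 1 r a)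
        (normR A₀.N A₁.N θ₁ r r₁ (fun t => b₁ t * a (ρ t)) b₁)) := by
  obtain ⟨d, e0, e1, hT, hv, L1, L2, K1, K2, hcpos, hρpos, hcreg, hρreg, P, hP, p1, p2⟩ :=
    setup_data A₀ A₁ θ₀ θ₁ hθ₀ hθ₀₁ hθ₁ q₀ r₀ r₁ hq₀ hr₀ hr₁ a₀ b₀ b₁ h_sv_a₀ h_sv_b₀ h_sv_b₁
      hfin c₀ ρ hc₀ hρ
  have hmain := fun (θ : ℝ) (h0 : 0 < θ) (h1 : θ ≤ 1) =>
    main_equiv A₀ A₁ _ _ d h_sv_a L1 L2 K1 K2 (ρ := fun k => ρ (dy k))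
      (fun k => hρpos _ (dy_pos k)) hP p1 p2 h0 h1 hr
  have hareg : RegF (fun (_ : E) u => ENNReal.ofReal (a (ρ u))) := RegF_comp h_sv_a hρpos hρreg
  constructor
  · intro θ h0 h1
    obtain ⟨hw, m1, m2⟩ := hmain θ h0 h1.le
    have hs : 0 < (d.θ₁ - d.θ₀) * (1 - θ) := mul_pos (by linarith [d.hθ]) (by linarith)
    obtain ⟨C, hC, t1⟩ := d.tail_hardy hs hw hr
    have hreg : RegF (fun (_ : E) u => ENNReal.ofReal (u ^ (-((1 - θ) * θ₀ + θ * θ₁)) *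
        (c₀ u ^ (1 - θ) * b₁ u ^ θ * a (ρ u)))) := by
      refine ((MReg_pow (-((1 - θ) * θ₀ + θ * θ₁))).regF.mul
        (((hcreg.const.rpow (p := 1 - θ) (by linarith)).mul
          ((MReg_SV h_sv_b₁).regF.rpow h0.le)).mul hareg)).congr fun _ u hu => ?_
      have hc := hcpos u hu
      have hb := SV_pos h_sv_b₁ hu
      rw [ENNReal.ofReal_mul (by positivity), ENNReal.ofReal_mul (by positivity),
        ENNReal.ofReal_mul (by positivity), ENNReal.ofReal_rpow_of_pos hc,
        ENNReal.ofReal_rpow_of_pos hb]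
    obtain ⟨d1, d2⟩ := (hreg.mul (MReg_Kf A₀.N A₁.N).regF).disc hr
    have eK : normK A₀.N A₁.N ((1 - θ) * θ₀ + θ * θ₁) r
        (fun t => c₀ t ^ (1 - θ) * b₁ t ^ θ * a (ρ t)) = _ :=
      funext fun f => normK_eq A₀.N A₁.N _ r _ f
    have key : ∀ (f : E) (k : ℤ),
        ENNReal.ofReal (ρ (dy k) ^ (1 - θ) * a (ρ (dy k))) * (d.v k * KK A₀ A₁ f k) =
        ENNReal.ofReal (dy k ^ (-((1 - θ) * θ₀ + θ * θ₁)) *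
          (c₀ (dy k) ^ (1 - θ) * b₁ (dy k) ^ θ * a (ρ (dy k)))) *
          Kf A₀.N A₁.N (dy k) f := by
      intro f k
      have hk := dy_pos k
      have hc := hcpos _ hk
      have hb := SV_pos h_sv_b₁ hk
      have hr' := hρpos _ hk
      have haρ := SV_pos h_sv_a hr'
      rw [hv, ← mul_assoc, ← ENNReal.ofReal_mul (by positivity)]
      show _ * Kf A₀.N A₁.N (dy k) f = _
      congr 2
      have e2 : ρ (dy k) ^ (1 - θ) = dy k ^ ((θ₁ - θ₀) * (1 - θ)) *
          (c₀ (dy k) ^ (1 - θ) / b₁ (dy k) ^ (1 - θ)) := by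
        rw [hρ, Real.mul_rpow (by positivity) (by positivity), ← Real.rpow_mul hk.le,
          Real.div_rpow hc.le hb.le]
      have e3 : b₁ (dy k) = b₁ (dy k) ^ (1 - θ) * b₁ (dy k) ^ θ := by
        rw [← Real.rpow_add hb, sub_add_cancel, Real.rpow_one]
      have e4 : dy k ^ (-((1 - θ) * θ₀ + θ * θ₁)) =
          dy k ^ ((θ₁ - θ₀) * (1 - θ)) * dy k ^ (-θ₁) := by
        rw [← Real.rpow_add hk]
        congr 1
        ring
      have e5 : c₀ (dy k) ^ (1 - θ) / b₁ (dy k) ^ (1 - θ) * b₁ (dy k) =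
          c₀ (dy k) ^ (1 - θ) * b₁ (dy k) ^ θ := by
        conv_lhs => rw [e3]
        have : b₁ (dy k) ^ (1 - θ) ≠ 0 := by positivity
        rw [← e3]
        rw [div_mul_eq_mul_div, div_eq_iff this, mul_assoc (c₀ (dy k) ^ (1 - θ)),
          mul_comm (b₁ (dy k) ^ θ), ← e3]
      rw [e2, e4, ← e5]
      ring
    refine EquivNorms.of_LeC (m1.trans ?_) (LeC.trans ?_ m2)
    · rw [eK]
      refine LeC.trans ⟨C, hC, fun f => t1 (KK A₀ A₁ f)⟩ (LeC.trans ?_ d2)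
      exact LeC.of_le fun f => dN_mono fun k => (key f k).le
    · rw [eK]
      refine d1.trans ?_
      refine LeC.of_le fun f => dN_mono fun k => ?_
      rw [← key f k]
      exact mul_le_mul' le_rfl (d.le_T _ k)
  · intro _
    obtain ⟨-, m1, m2⟩ := hmain 1 one_pos le_rfl
    have hreg : RegF (fun (_ : E) u => ENNReal.ofReal (b₁ u * a (ρ u) / b₁ u)) := by
      refine hareg.congr fun _ u hu => ?_
      have hb := SV_pos h_sv_b₁ hu
      rw [mul_div_cancel_left₀ _ hb.ne']
    obtain ⟨d1, d2⟩ := disc2 hreg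
      (((RegF_wgt (ι := E) h_sv_b₁ (-θ₁)).mul (MReg_Kf A₀.N A₁.N)).regF.tail hr₁) hr
    have eR : normR A₀.N A₁.N θ₁ r r₁ (fun t => b₁ t * a (ρ t)) b₁ = _ :=
      funext fun f => normR_eq A₀.N A₁.N θ₁ r r₁ _ b₁ f
    have key : ∀ (f : E) (k : ℤ),
        ENNReal.ofReal (ρ (dy k) ^ ((1 : ℝ) - 1) * a (ρ (dy k))) * d.T (KK A₀ A₁ f) k =
        ENNReal.ofReal (b₁ (dy k) * a (ρ (dy k)) / b₁ (dy k)) *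
          dN r₁ (fun j => if k ≤ j then ENNReal.ofReal (dy j ^ (-θ₁) * b₁ (dy j)) *
            Kf A₀.N A₁.N (dy j) f else 0) := by
      intro f k
      have hb := SV_pos h_sv_b₁ (dy_pos k)
      rw [sub_self, Real.rpow_zero, one_mul, hT, mul_div_cancel_left₀ _ hb.ne']
      rfl
    refine EquivNorms.of_LeC (m1.trans ?_) (LeC.trans ?_ m2)
    · rw [eR]
      exact LeC.trans (LeC.of_le fun f => dN_mono fun k => (key f k).le) d2
    · rw [eR]
      exact d1.trans (LeC.of_le fun f => dN_mono fun k => (key f k).ge)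

end
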